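/- arXiv:2206.14224 — 4 statements merged into one kernel-verified Lean document; each statement's English description precedes it below -/
import Mathlib

section
/- Let f : S_∞(2^{<ℕ}) → S_∞(2^{<ℕ}) be a Borel map. Then there exists a Ramsey conull set 𝓓 ⊆ S_∞(2^{<ℕ}) such that for all B ∈ 𝓓 and all A ∈ S_∞(2^{<ℕ}) with A ≤ B, if f(A) ≤ B then f(A) ≤ A. -/
/-- The `ℓ`-th splitting level (height) of a subset `A` of the full binary tree `2^{<ℕ}`
(finite binary strings, modelled as `List Bool`): the `ℓ`-th smallest length of a member
of `A`. -/
noncomputable def levelOf (A : Set (List Bool)) (ℓ : ℕ) : ℕ :=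
  Nat.nth (fun h => ∃ a ∈ A, a.length = h) ℓ

/-- `A` is an (infinite) strong subtree of `2^{<ℕ}`: there is a strictly increasing sequence
`k₀ < k₁ < ⋯` such that `A` is partitioned into its level sets `A(ℓ) = A ∩ 2^{k_ℓ}`,
`A(0)` is a singleton (the root), every `a ∈ A(ℓ)` and `i ∈ {0,1}` admit exactly one
`b ∈ A(ℓ+1)` extending `a⌢i`, and every member of `A(ℓ+1)` arises this way. -/
def IsStrongSubtree (A : Set (List Bool)) : Prop :=
  ∃ k : ℕ → ℕ, StrictMono k ∧
    (∀ a ∈ A, ∃ ℓ, a.length = k ℓ) ∧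
    (∃! a, a ∈ A ∧ a.length = k 0) ∧
    (∀ ℓ : ℕ, ∀ a ∈ A, a.length = k ℓ → ∀ i : Bool,
      ∃! b, b ∈ A ∧ b.length = k (ℓ + 1) ∧ (a ++ [i]) <+: b) ∧
    (∀ ℓ : ℕ, ∀ b ∈ A, b.length = k (ℓ + 1) →
      ∃ a ∈ A, a.length = k ℓ ∧ ∃ i : Bool, (a ++ [i]) <+: b)

/-- The Milliken space `S_∞(2^{<ℕ})` of all strong subtrees of `2^{<ℕ}`, viewed as a subset of
the Polish space `2^{2^{<ℕ}}` with the induced Borel structure. -/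
def Sinf : Type := {A : Set (List Bool) // IsStrongSubtree A}

instance : MeasurableSpace Sinf :=
  inferInstanceAs (MeasurableSpace {A : Set (List Bool) // IsStrongSubtree A})

/-- The finite approximation `r_n(A) = A(0) ∪ ⋯ ∪ A(n−1)`: members of `A` of height among
the first `n` levels of `A`. -/
noncomputable def approxT (A : Set (List Bool)) (n : ℕ) : Set (List Bool) :=
  {a ∈ A | ∃ ℓ < n, a.length = levelOf A ℓ}

/-- `s ⊑ A`: `s = r_n(A)` for some `n`. -/
def InitSegT (s A : Set (List Bool)) : Prop := ∃ n, s = approxT A n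

/-- The Ellentuck cube `[s, A] = {B ∈ S_∞(2^{<ℕ}) : s ⊑ B and B ⊆ A}`. -/
def cubeT (s : Set (List Bool)) (A : Sinf) : Set Sinf :=
  {B | InitSegT s B.1 ∧ B.1 ⊆ A.1}

/-- `𝓧 ⊆ S_∞(2^{<ℕ})` is Ramsey null. -/
def RamseyNullT (X : Set Sinf) : Prop :=
  ∀ s A, (cubeT s A).Nonempty → ∃ B ∈ cubeT s A, cubeT s B ∩ X = ∅

/-- `𝓧 ⊆ S_∞(2^{<ℕ})` is Ramsey conull. -/
def RamseyConullT (X : Set Sinf) : Prop := RamseyNullT Xᶜ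

/-!
A strong subtree is the range of a unique strong embedding of the full binary tree into itself. Sets
of strong embeddings that are Borel for pointwise convergence are completely Ramsey, by a
Galvin–Prikry type argument whose pigeonhole principle is the Carlson–Simpson theorem.

If `f(A)` has points outside `A`, choose one of them, `g(A)`, measurably in `A`. Suppose that
`g(Bψ) = B(p)` for a node `p` that is not on `ψ`. There are two embeddings `θ₁`, `θ₂` with
`θ₁ψ = θ₂ψ` but `θ₁(p) ≠ θ₂(p)`, so the equation cannot hold for both `Bθ₁` and `Bθ₂` in place of
`B`. As the set of `B` satisfying it is completely Ramsey, it can be avoided on a subcube. Up to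
refinements of `B`, each level gives only finitely many pairs `(ψ, p)`, so a fusion argument
produces a `B` that avoids all of them, which means that `g(A)` is never in `B` for `A ≤ B`.
-/

/-! ### Strong embeddings -/

section Words

variable {α : Type*}

theorem eq_of_append_singleton_prefix {w z : List α} {i j : α} (hi : w ++ [i] <+: z)
    (hj : w ++ [j] <+: z) : i = j := by
  have h := (List.prefix_of_prefix_length_le hi hj (by simp)).eq_of_length (by simp)
  simpa using h

theorem prefix_or_prefix_or_diverge (a b : List α) : a <+: b ∨ b <+: a ∨
    ∃ c i j r r', i ≠ j ∧ a = c ++ i :: r ∧ b = c ++ j :: r' := by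
  induction a generalizing b with
  | nil => exact Or.inl List.nil_prefix
  | cons x a ih =>
    rcases b with _ | ⟨y, b⟩
    · exact Or.inr (Or.inl List.nil_prefix)
    · by_cases hxy : x = y
      · subst hxy
        rcases ih b with h | h | ⟨c, i, j, r, r', hij, rfl, rfl⟩
        · exact Or.inl (by simpa using h)
        · exact Or.inr (Or.inl (by simpa using h))
        · exact Or.inr (Or.inr ⟨x :: c, i, j, r, r', hij, rfl, rfl⟩)
      · exact Or.inr (Or.inr ⟨[], x, y, a, b, hxy, rfl, rfl⟩)

theorem exists_eq_append_of_le_length {t : List α} {k : ℕ} (h : k ≤ t.length) :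
    ∃ w r, t = w ++ r ∧ w.length = k :=
  ⟨t.take k, t.drop k, (List.take_append_drop k t).symm, List.length_take_of_le h⟩

theorem exists_eq_append_cons_of_lt_length {t : List α} {k : ℕ} (h : k < t.length) :
    ∃ w i r, t = w ++ i :: r ∧ w.length = k := by
  obtain ⟨w, r, rfl, rfl⟩ := exists_eq_append_of_le_length h.le
  obtain ⟨i, r, rfl⟩ := List.exists_cons_of_length_pos (l := r) (by simpa using h)
  exact ⟨w, i, r, rfl, rfl⟩

theorem drop_append_singleton_prefix {a b : List α} {i : α} (N : ℕ) (h : a ++ [i] <+: b)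
    (hN : N ≤ a.length) : a.drop N ++ [i] <+: b.drop N := by
  rw [← List.drop_append_of_le_length hN]
  exact h.drop N

end Words

/-- A strong embedding of the tree of finite words over `α` into itself: it preserves equality of
lengths and maps the `i`-th immediate successor of a node above the `i`-th immediate successor of
its image. Over `Bool` the ranges of strong embeddings are exactly the strong subtrees, so a strong
subtree is handled through the unique strong embedding enumerating it. -/
@[ext]
structure StrongEmbedding (α : Type*) where
  toFun : List α → List α
  length_congr' : ∀ {s t : List α}, s.length = t.length → (toFun s).length = (toFun t).length
  append_singleton_prefix' : ∀ (t : List α) (i : α), toFun t ++ [i] <+: toFun (t ++ [i])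

namespace StrongEmbedding

variable {α : Type*}

instance : CoeFun (StrongEmbedding α) (fun _ => List α → List α) := ⟨toFun⟩

theorem length_congr (φ : StrongEmbedding α) {s t : List α} (h : s.length = t.length) :
    (φ s).length = (φ t).length :=
  φ.length_congr' h

theorem append_singleton_prefix (φ : StrongEmbedding α) (t : List α) (i : α) :
    φ t ++ [i] <+: φ (t ++ [i]) :=
  φ.append_singleton_prefix' t i

theorem mono (φ : StrongEmbedding α) {s t : List α} (h : s <+: t) : φ s <+: φ t := by
  obtain ⟨r, rfl⟩ := h
  induction r using List.reverseRecOn with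
  | nil => simp
  | append_singleton r i ih =>
    rw [← List.append_assoc]
    exact ih.trans ((List.prefix_append _ _).trans (φ.append_singleton_prefix _ i))

theorem prefix_append_cons (φ : StrongEmbedding α) (t r : List α) (i : α) :
    φ t ++ [i] <+: φ (t ++ i :: r) :=
  (φ.append_singleton_prefix t i).trans (φ.mono ⟨r, by simp⟩)

instance : Monoid (StrongEmbedding α) where
  mul φ ψ :=
    { toFun := fun t => φ (ψ t)
      length_congr' := fun h => φ.length_congr (ψ.length_congr h)
      append_singleton_prefix' := fun t i =>
        (φ.append_singleton_prefix _ i).trans (φ.mono (ψ.append_singleton_prefix t i)) }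
  one :=
    { toFun := id
      length_congr' := id
      append_singleton_prefix' := fun _ _ => List.prefix_rfl }
  mul_assoc _ _ _ := rfl
  one_mul _ := rfl
  mul_one _ := rfl

@[simp]
theorem mul_apply (φ ψ : StrongEmbedding α) (t : List α) : (φ * ψ) t = φ (ψ t) := rfl

@[simp]
theorem one_apply (t : List α) : (1 : StrongEmbedding α) t = t := rfl

theorem ext_apply {φ ψ : StrongEmbedding α} (h : ∀ t, φ t = ψ t) : φ = ψ :=
  StrongEmbedding.ext (funext h)

theorem ext_of_level {φ ψ : StrongEmbedding α} (k : ℕ) (hlt : ∀ t, t.length < k → φ t = ψ t)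
    (hge : ∀ w r, w.length = k → φ (w ++ r) = ψ (w ++ r)) : φ = ψ := by
  refine ext_apply fun t => (lt_or_ge t.length k).elim (hlt t) fun ht => ?_
  obtain ⟨w, r, rfl, hw⟩ := exists_eq_append_of_le_length ht
  exact hge w r hw

theorem length_lt_length (φ : StrongEmbedding α) {s t : List α} (h : s.length < t.length) :
    (φ s).length < (φ t).length := by
  obtain ⟨u, i, r, rfl, hu⟩ := exists_eq_append_cons_of_lt_length h
  have := (φ.prefix_append_cons u r i).length_le
  rw [List.length_append, List.length_singleton, φ.length_congr hu] at this
  omega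

theorem length_le_length (φ : StrongEmbedding α) {s t : List α} (h : s.length ≤ t.length) :
    (φ s).length ≤ (φ t).length :=
  h.lt_or_eq.elim (fun h => (φ.length_lt_length h).le) fun h => (φ.length_congr h).le

theorem length_le_length_iff (φ : StrongEmbedding α) {s t : List α} :
    (φ s).length ≤ (φ t).length ↔ s.length ≤ t.length :=
  ⟨fun h => not_lt.1 fun hlt => (φ.length_lt_length hlt).not_ge h, φ.length_le_length⟩

theorem length_lt_length_iff (φ : StrongEmbedding α) {s t : List α} :
    (φ s).length < (φ t).length ↔ s.length < t.length := by
  simpa only [not_le] using φ.length_le_length_iff.not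

theorem length_eq_length_iff (φ : StrongEmbedding α) {s t : List α} :
    (φ s).length = (φ t).length ↔ s.length = t.length := by
  simp only [le_antisymm_iff, length_le_length_iff]

theorem length_le_length_apply (φ : StrongEmbedding α) (t : List α) :
    t.length ≤ (φ t).length := by
  induction t using List.reverseRecOn with
  | nil => simp
  | append_singleton t i ih =>
    have := (φ.append_singleton_prefix t i).length_le
    simp only [List.length_append, List.length_singleton] at this ⊢
    omega

theorem injective (φ : StrongEmbedding α) : Function.Injective φ := by
  intro s t h
  have hlen : s.length = t.length := φ.length_eq_length_iff.1 (by rw [h])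
  rcases prefix_or_prefix_or_diverge s t with hst | hts | ⟨c, i, j, r, r', hij, rfl, rfl⟩
  · exact hst.eq_of_length hlen
  · exact (hts.eq_of_length hlen.symm).symm
  · have hj := φ.prefix_append_cons c r' j
    rw [← h] at hj
    exact absurd (eq_of_append_singleton_prefix (φ.prefix_append_cons c r i) hj) hij

theorem append_singleton_prefix_of_apply (φ : StrongEmbedding α) {a b : List α} {i : α}
    (h : φ a ++ [i] <+: φ b) : a ++ [i] <+: b := by
  have hlt : a.length < b.length := φ.length_lt_length_iff.1 (by simpa using h.length_le)
  obtain ⟨u, j, r, rfl, hu⟩ := exists_eq_append_cons_of_lt_length hlt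
  have heq : φ a ++ [i] = φ u ++ [j] :=
    (List.prefix_of_prefix_length_le h (φ.prefix_append_cons u r j)
      (by simp [φ.length_congr hu])).eq_of_length (by simp [φ.length_congr hu])
  obtain ⟨hau, hij⟩ := List.append_inj' heq rfl
  rw [φ.injective hau, hij]
  exact ⟨r, by simp⟩

theorem mem_range_of_branching (ψ : StrongEmbedding α) {w a b : List α} {i j : α} (hij : i ≠ j)
    (ha : w ++ [i] <+: ψ a) (hb : w ++ [j] <+: ψ b) : w ∈ Set.range ψ := by
  rcases prefix_or_prefix_or_diverge a b with h | h | ⟨c, i', j', r, r', hij', rfl, rfl⟩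
  · exact absurd (eq_of_append_singleton_prefix (ha.trans (ψ.mono h)) hb) hij
  · exact absurd (eq_of_append_singleton_prefix (hb.trans (ψ.mono h)) ha) hij.symm
  have hi' := ψ.prefix_append_cons c r i'
  have hj' := ψ.prefix_append_cons c r' j'
  have hwa := (List.prefix_append w [i]).trans ha
  have hwb := (List.prefix_append w [j]).trans hb
  have hca := (List.prefix_append (ψ c) [i']).trans hi'
  have hcb := (List.prefix_append (ψ c) [j']).trans hj'
  rcases lt_trichotomy (ψ c).length w.length with h | h | h
  · exact absurd (eq_of_append_singleton_prefix
      (List.prefix_of_prefix_length_le hi' hwa (by simpa using h))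
      (List.prefix_of_prefix_length_le hj' hwb (by simpa using h))) hij'
  · exact ⟨c, (List.prefix_of_prefix_length_le hca hwa h.le).eq_of_length h⟩
  · exact absurd (eq_of_append_singleton_prefix
      (List.prefix_of_prefix_length_le ha hca (by simpa using h))
      (List.prefix_of_prefix_length_le hb hcb (by simpa using h))) hij

theorem exists_eq_mul_of_range_subset {φ φ' : StrongEmbedding α}
    (h : Set.range φ ⊆ Set.range φ') : ∃ ψ, φ = φ' * ψ := by
  choose ψ hψ using fun t => h (Set.mem_range_self t)
  refine ⟨⟨ψ, fun {s t} hst => φ'.length_eq_length_iff.1 ?_, fun t i =>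
    φ'.append_singleton_prefix_of_apply ?_⟩, ext_apply fun t => (hψ t).symm⟩
  · simpa only [hψ] using φ.length_congr hst
  · simpa only [hψ] using φ.append_singleton_prefix t i

theorem range_mul_subset (φ ψ : StrongEmbedding α) : Set.range (φ * ψ) ⊆ Set.range φ :=
  Set.range_comp_subset_range ψ φ

section Level

variable [Nonempty α]

/-- The length of the images under `φ` of the words of length `n`. -/
noncomputable def level (φ : StrongEmbedding α) (n : ℕ) : ℕ :=
  (φ (List.replicate n (Classical.arbitrary α))).length

theorem length_apply (φ : StrongEmbedding α) (t : List α) : (φ t).length = φ.level t.length :=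
  φ.length_congr (by simp)

theorem strictMono_level (φ : StrongEmbedding α) : StrictMono φ.level :=
  fun _ _ h => φ.length_lt_length (by simpa using h)

end Level

/-- The submonoid of strong embeddings that fix every word of length less than `n`. -/
def fixing (n : ℕ) : Submonoid (StrongEmbedding α) where
  carrier := {χ | ∀ t : List α, t.length < n → χ t = t}
  mul_mem' {χ θ} hχ hθ t ht := by rw [mul_apply, hθ t ht, hχ t ht]
  one_mem' _ _ := rfl

theorem fixing_antitone : Antitone (fixing : ℕ → Submonoid (StrongEmbedding α)) :=
  fun _ _ h _ hχ t ht => hχ t (ht.trans_le h)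

theorem prefix_apply_of_mem_fixing {n : ℕ} {χ : StrongEmbedding α} (hχ : χ ∈ fixing n)
    {t : List α} (ht : t.length ≤ n) : t <+: χ t := by
  rcases List.eq_nil_or_concat t with rfl | ⟨u, i, rfl⟩
  · exact List.nil_prefix
  · have := χ.append_singleton_prefix u i
    rw [hχ u (by simpa using ht)] at this
    simpa using this

/-- The cube of refinements of `φ` that keep its first `n` levels: the counterpart of the Ellentuck
cube `[r_n(A), A]`, where `A` is the range of `φ`. -/
def cube (n : ℕ) (φ : StrongEmbedding α) : Set (StrongEmbedding α) :=
  {ψ | ∃ θ ∈ fixing n, φ * θ = ψ}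

theorem mul_mem_cube {n : ℕ} (φ : StrongEmbedding α) {θ : StrongEmbedding α}
    (hθ : θ ∈ fixing n) : φ * θ ∈ cube n φ :=
  ⟨θ, hθ, rfl⟩

theorem self_mem_cube (n : ℕ) (φ : StrongEmbedding α) : φ ∈ cube n φ :=
  ⟨1, one_mem _, mul_one φ⟩

theorem cube_subset_cube {n : ℕ} {φ ψ : StrongEmbedding α} (h : ψ ∈ cube n φ) :
    cube n ψ ⊆ cube n φ := by
  obtain ⟨θ, hθ, rfl⟩ := h
  rintro _ ⟨θ', hθ', rfl⟩
  exact ⟨θ * θ', mul_mem hθ hθ', (mul_assoc _ _ _).symm⟩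

theorem cube_anti {m n : ℕ} (h : m ≤ n) (φ : StrongEmbedding α) : cube n φ ⊆ cube m φ := by
  rintro _ ⟨θ, hθ, rfl⟩
  exact mul_mem_cube φ (fixing_antitone h hθ)

theorem range_subset_of_mem_cube {n : ℕ} {φ ψ : StrongEmbedding α} (h : ψ ∈ cube n φ) :
    Set.range ψ ⊆ Set.range φ := by
  obtain ⟨θ, -, rfl⟩ := h
  exact range_mul_subset φ θ

theorem mul_mem_cube_mul {n : ℕ} (φ : StrongEmbedding α) {ψ ψ' : StrongEmbedding α}
    (h : ψ ∈ cube n ψ') : φ * ψ ∈ cube n (φ * ψ') := by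
  obtain ⟨θ, hθ, rfl⟩ := h
  exact ⟨θ, hθ, mul_assoc _ _ _⟩

theorem cube_mul (n : ℕ) (φ ψ : StrongEmbedding α) :
    cube n (φ * ψ) = (φ * ·) '' cube n ψ := by
  simp only [cube, Set.image, Set.mem_ofPred_eq, exists_exists_and_eq_and, mul_assoc]

theorem cube_mul_subset_iff {n : ℕ} {φ ψ : StrongEmbedding α} {X : Set (StrongEmbedding α)} :
    cube n (φ * ψ) ⊆ X ↔ cube n ψ ⊆ (φ * ·) ⁻¹' X := by
  rw [cube_mul, Set.image_subset_iff]

/-- The strong embeddings agreeing with `φ` on all words of length less than `k`. These sets form a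
basis of the topology of pointwise convergence. -/
def cylinder (k : ℕ) (φ : StrongEmbedding α) : Set (StrongEmbedding α) :=
  {ψ | ∀ t : List α, t.length < k → ψ t = φ t}

theorem self_mem_cylinder (k : ℕ) (φ : StrongEmbedding α) : φ ∈ cylinder k φ := fun _ _ => rfl

theorem cylinder_eq_cylinder {k : ℕ} {φ ψ : StrongEmbedding α} (h : ψ ∈ cylinder k φ) :
    cylinder k ψ = cylinder k φ := by
  ext χ
  exact forall₂_congr fun t ht => by rw [h t ht]

theorem cylinder_anti {k m : ℕ} (h : k ≤ m) (φ : StrongEmbedding α) :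
    cylinder m φ ⊆ cylinder k φ :=
  fun _ hψ t ht => hψ t (ht.trans_le h)

theorem cube_subset_cylinder (k : ℕ) (φ : StrongEmbedding α) : cube k φ ⊆ cylinder k φ := by
  rintro _ ⟨θ, hθ, rfl⟩ t ht
  rw [mul_apply, hθ t ht]

theorem mem_cube_of_range_subset {n : ℕ} {φ ψ : StrongEmbedding α}
    (h : Set.range ψ ⊆ Set.range φ) (hψ : ψ ∈ cylinder n φ) : ψ ∈ cube n φ := by
  obtain ⟨χ, rfl⟩ := exists_eq_mul_of_range_subset h
  exact mul_mem_cube φ fun t ht => φ.injective (hψ t ht)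

theorem mul_mem_cylinder_mul {k : ℕ} (φ : StrongEmbedding α) {ψ ψ' : StrongEmbedding α}
    (h : ψ ∈ cylinder k ψ') : φ * ψ ∈ cylinder k (φ * ψ') :=
  fun t ht => congrArg φ (h t ht)

section Glue

/-- The strong embedding that equals `φ` below level `k` and maps `w ++ r` to `g w r` for every
word `w` of length `k`. -/
def glue (k : ℕ) (φ : StrongEmbedding α) (g : List α → List α → List α)
    (length_congr : ∀ {w w' r r' : List α}, w.length = k → w'.length = k →
      r.length = r'.length → (g w r).length = (g w' r').length)
    (prefix_above : ∀ (w r : List α) (i : α), w.length = k → g w r ++ [i] <+: g w (r ++ [i]))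
    (prefix_at : ∀ (t : List α) (i : α), t.length + 1 = k → φ t ++ [i] <+: g (t ++ [i]) []) :
    StrongEmbedding α where
  toFun t := if t.length < k then φ t else g (t.take k) (t.drop k)
  length_congr' {s t} hst := by
    by_cases hs : s.length < k
    · simpa only [hs, hst ▸ hs, if_true] using φ.length_congr hst
    · simp only [hs, hst ▸ hs, if_false]
      exact length_congr (by simp; omega) (by simp; omega) (by simp [hst])
  append_singleton_prefix' t i := by
    rcases lt_trichotomy (t.length + 1) k with ht | ht | ht
    · simpa [ht, Nat.lt_of_succ_lt ht] using φ.append_singleton_prefix t i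
    · simpa [← ht, List.take_of_length_le] using prefix_at t i ht
    · have hk : k ≤ t.length := Nat.lt_succ_iff.1 ht
      simpa [hk.not_gt, ht.not_gt, List.take_append_of_le_length hk,
        List.drop_append_of_le_length hk] using prefix_above (t.take k) (t.drop k) i (by simpa)

variable {k : ℕ} {φ : StrongEmbedding α} {g : List α → List α → List α} {h₁ h₂ h₃}

theorem glue_apply_of_lt {t : List α} (ht : t.length < k) : glue k φ g h₁ h₂ h₃ t = φ t :=
  if_pos ht

theorem glue_apply_append {w : List α} (hw : w.length = k) (r : List α) :
    glue k φ g h₁ h₂ h₃ (w ++ r) = g w r := by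
  simp [glue, ← hw]

/-- The strong embedding that fixes all words of length less than `N` and maps `w ++ r` to
`w ++ g w r` for every word `w` of length `N`. -/
def extendAbove (N : ℕ) (g : List α → List α → List α)
    (length_congr : ∀ {w w' r r' : List α}, w.length = N → w'.length = N →
      r.length = r'.length → (g w r).length = (g w' r').length)
    (prefix_above : ∀ (w r : List α) (i : α), w.length = N → g w r ++ [i] <+: g w (r ++ [i])) :
    StrongEmbedding α :=
  glue N 1 (fun w r => w ++ g w r)
    (fun hw hw' hr => by
      rw [List.length_append, List.length_append, hw, hw', length_congr hw hw' hr])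
    (fun w r i hw => by
      rw [List.append_assoc]
      exact (List.prefix_append_right_inj w).2 (prefix_above w r i hw))
    (fun _ _ _ => List.prefix_append _ _)

theorem extendAbove_mem_fixing {N : ℕ} {h₁ h₂} : extendAbove N g h₁ h₂ ∈ fixing N :=
  fun _ ht => glue_apply_of_lt ht

theorem extendAbove_apply_append {N : ℕ} {h₁ h₂} {w : List α} (hw : w.length = N) (r : List α) :
    extendAbove N g h₁ h₂ (w ++ r) = w ++ g w r :=
  glue_apply_append hw r

end Glue

end StrongEmbedding

/-! ### Fusion -/

namespace StrongEmbedding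

variable {α : Type*}

/-- `ψ` has exactly `k` levels below height `N`, its `k`-th level lies at height `N`, and above that
level it branches at every node. Such a `ψ` is a finite object, and every strong embedding is above
height `N` a refinement of one of them. -/
structure IsCanonical (k N : ℕ) (ψ : StrongEmbedding α) : Prop where
  length_lt : ∀ t : List α, t.length < k → (ψ t).length < N
  length_eq : ∀ t : List α, t.length = k → (ψ t).length = N
  apply_append : ∀ t r : List α, t.length = k → ψ (t ++ r) = ψ t ++ r

namespace IsCanonical

variable {k N : ℕ} {ψ' φ : StrongEmbedding α}

theorem mem_cube_of_prefix (h : IsCanonical k N ψ') (hφ : φ ∈ cylinder k ψ')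
    (hprefix : ∀ t : List α, t.length = k → ψ' t <+: φ t) : φ ∈ cube k ψ' := by
  refine mem_cube_of_range_subset ?_ hφ
  rintro _ ⟨t, rfl⟩
  rcases lt_or_ge t.length k with ht | ht
  · exact ⟨t, (hφ t ht).symm⟩
  · obtain ⟨w, r, rfl, hw⟩ := exists_eq_append_of_le_length ht
    obtain ⟨s, hs⟩ := (hprefix w hw).trans (φ.mono (List.prefix_append w r))
    exact ⟨w ++ s, (h.apply_append w s hw).trans hs⟩

theorem mem_cylinder_mul (h : IsCanonical k N ψ') {A B : StrongEmbedding α}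
    (hAB : A ∈ cylinder N B) : A * ψ' ∈ cylinder k (B * ψ') :=
  fun t ht => hAB _ (h.length_lt t ht)

section Nonempty

variable [Nonempty α]

theorem le (h : IsCanonical k N ψ') : k ≤ N := by
  obtain ⟨t, rfl⟩ : ∃ t : List α, t.length = k :=
    ⟨List.replicate k (Classical.arbitrary α), List.length_replicate⟩
  exact h.length_eq t rfl ▸ ψ'.length_le_length_apply t

theorem exists_mul_eq_of_prefix (h : IsCanonical k N ψ') (hφ : φ ∈ cylinder k ψ')
    (hprefix : ∀ t : List α, t.length = k → ψ' t <+: φ t) : ∃ θ ∈ fixing N, θ * ψ' = φ := by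
  have hpreimage : ∀ w, ∃ t : List α, t.length = k ∧ ∀ t', t'.length = k → ψ' t' = w → t' = t := by
    intro w
    by_cases hw : ∃ t : List α, t.length = k ∧ ψ' t = w
    · obtain ⟨t, ht, rfl⟩ := hw
      exact ⟨t, ht, fun t' _ ht' => ψ'.injective ht'⟩
    · exact ⟨List.replicate k (Classical.arbitrary α), List.length_replicate,
        fun t' ht' h' => absurd ⟨t', ht', h'⟩ hw⟩
  choose τ hτ_length hτ using hpreimage
  have hN : ∀ w r, N ≤ (φ (τ w ++ r)).length := fun w r =>
    calc N = (ψ' (τ w)).length := (h.length_eq _ (hτ_length w)).symm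
      _ ≤ (φ (τ w)).length := (hprefix _ (hτ_length w)).length_le
      _ ≤ (φ (τ w ++ r)).length := φ.length_le_length (by simp)
  refine ⟨extendAbove N (fun w r => (φ (τ w ++ r)).drop N) ?_ ?_, extendAbove_mem_fixing,
    ext_of_level k (fun t ht => ?_) fun t r ht => ?_⟩
  · intro w w' r r' _ _ hr
    have := φ.length_congr (s := τ w ++ r) (t := τ w' ++ r') (by simp [hτ_length, hr])
    simp [this]
  · intro w r i _
    rw [← List.append_assoc]
    exact drop_append_singleton_prefix N (φ.append_singleton_prefix _ i) (hN w r)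
  · rw [mul_apply, extendAbove_mem_fixing _ (h.length_lt t ht), hφ t ht]
  · obtain ⟨s, hs⟩ := (hprefix t ht).trans (φ.mono (List.prefix_append t r))
    have hlen := h.length_eq t ht
    rw [mul_apply, h.apply_append t r ht, extendAbove_apply_append hlen, ← hτ _ t ht rfl, ← hs,
      ← hlen, List.drop_left]

theorem mem_cube_iff (h : IsCanonical k N ψ') : φ ∈ cube k ψ' ↔ ∃ θ ∈ fixing N, θ * ψ' = φ := by
  constructor
  · intro hφ
    refine h.exists_mul_eq_of_prefix (cube_subset_cylinder k ψ' hφ) fun t ht => ?_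
    obtain ⟨χ, hχ, rfl⟩ := hφ
    exact ψ'.mono (prefix_apply_of_mem_fixing hχ ht.le)
  · rintro ⟨θ, hθ, rfl⟩
    exact h.mem_cube_of_prefix (fun t ht => hθ _ (h.length_lt t ht)) fun t ht =>
      prefix_apply_of_mem_fixing hθ (h.length_eq t ht).le

theorem mul_mem_cube_mul_right (h : IsCanonical k N ψ') {A B : StrongEmbedding α}
    (hAB : A ∈ cube N B) : A * ψ' ∈ cube k (B * ψ') := by
  obtain ⟨θ, hθ, rfl⟩ := hAB
  rw [mul_assoc]
  exact mul_mem_cube_mul B (h.mem_cube_iff.2 ⟨θ, hθ, rfl⟩)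

theorem exists_mul_eq_of_mem_cube_mul (h : IsCanonical k N ψ') {A B : StrongEmbedding α}
    (hA : A ∈ cube k (B * ψ')) : ∃ C ∈ cube N B, C * ψ' = A := by
  obtain ⟨χ, hχ, rfl⟩ := hA
  obtain ⟨θ, hθ, hθχ⟩ := h.mem_cube_iff.1 (mul_mem_cube ψ' hχ)
  exact ⟨B * θ, mul_mem_cube B hθ, by rw [mul_assoc, mul_assoc, hθχ]⟩

end Nonempty

end IsCanonical

theorem finite_setOf_isCanonical [Finite α] (k N : ℕ) :
    {ψ : StrongEmbedding α | IsCanonical k N ψ}.Finite := by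
  have : Finite {t : List α | t.length ≤ k} := List.finite_length_le α k
  have hmaps : Set.MapsTo (fun (ψ : StrongEmbedding α) (t : {t : List α | t.length ≤ k}) => ψ t)
      {ψ | IsCanonical k N ψ} {f | ∀ t, f t ∈ {s : List α | s.length ≤ N}} := fun ψ hψ t =>
    t.2.lt_or_eq.elim (fun ht => (hψ.length_lt t ht).le) fun ht => (hψ.length_eq t ht).le
  refine Set.Finite.of_injOn hmaps (fun ψ hψ ψ' hψ' heq => ?_)
    (Set.Finite.pi' fun _ => List.finite_length_le α N)
  have happly : ∀ t : List α, t.length ≤ k → ψ t = ψ' t := fun t ht => congrFun heq ⟨t, ht⟩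
  refine ext_of_level k (fun t ht => happly t ht.le) fun w r hw => ?_
  rw [hψ.apply_append w r hw, hψ'.apply_append w r hw, happly w hw.le]

theorem finite_setOf_isCanonical_prod [Finite α] [Nonempty α] (N : ℕ) :
    {x : ℕ × StrongEmbedding α | IsCanonical x.1 N x.2}.Finite := by
  refine ((Set.finite_Iic N).biUnion fun k _ =>
    (finite_setOf_isCanonical k N).image (Prod.mk k)).subset ?_
  rintro ⟨k, ψ⟩ hψ
  exact Set.mem_biUnion (IsCanonical.le hψ) ⟨ψ, hψ, rfl⟩

theorem exists_isCanonical_of_length (ψ : StrongEmbedding α) (k N : ℕ)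
    (hlt : ∀ t : List α, t.length < k → (ψ t).length < N)
    (hge : ∀ t : List α, t.length = k → N ≤ (ψ t).length) :
    ∃ ψ', IsCanonical k N ψ' ∧ ψ' ∈ cylinder k ψ ∧ ∀ t : List α, t.length = k → ψ' t <+: ψ t := by
  let ψ' : StrongEmbedding α := glue k ψ (fun w r => (ψ w).take N ++ r)
    (fun hw hw' hr => by simp [ψ.length_congr (hw.trans hw'.symm), hr])
    (fun w r i _ => by simp)
    (fun t i ht => List.IsPrefix.trans
      (List.prefix_take_iff.2 ⟨ψ.append_singleton_prefix t i, by simpa using hlt t (by omega)⟩)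
      (List.prefix_append _ _))
  have happend : ∀ t r : List α, t.length = k → ψ' (t ++ r) = (ψ t).take N ++ r :=
    fun t r ht => glue_apply_append ht r
  have hlevel : ∀ t : List α, t.length = k → ψ' t = (ψ t).take N := fun t ht => by
    simpa using happend t [] ht
  refine ⟨ψ', ⟨fun t ht => ?_, fun t ht => ?_, fun t r ht => ?_⟩,
    fun t ht => glue_apply_of_lt ht, fun t ht => ?_⟩
  · rw [show ψ' t = ψ t from glue_apply_of_lt ht]
    exact hlt t ht
  · rw [hlevel t ht, List.length_take_of_le (hge t ht)]
  · rw [happend t r ht, hlevel t ht]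
  · rw [hlevel t ht]
    exact List.take_prefix N _

section Nonempty

variable [Nonempty α]

theorem exists_isCanonical_mem_cube (ψ : StrongEmbedding α) (N : ℕ) :
    ∃ k ψ', IsCanonical k N ψ' ∧ ψ ∈ cube k ψ' := by
  classical
  have hex : ∃ k, N ≤ ψ.level k := ⟨N, ψ.strictMono_level.le_apply⟩
  obtain ⟨ψ', hcanonical, hmem, hprefix⟩ := exists_isCanonical_of_length ψ (Nat.find hex) N
    (fun t ht => by rw [length_apply]; exact not_le.1 (Nat.find_min hex ht))
    (fun t ht => by rw [length_apply, ht]; exact Nat.find_spec hex)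
  exact ⟨_, ψ', hcanonical, hcanonical.mem_cube_of_prefix (fun t ht => (hmem t ht).symm) hprefix⟩

theorem exists_isCanonical_cylinder_subset_cube (ψ : StrongEmbedding α) (k : ℕ) :
    ∃ N ψ', IsCanonical k N ψ' ∧ ψ' ∈ cylinder k ψ ∧ cylinder k ψ ⊆ cube k ψ' := by
  rcases k with _ | k
  · exact ⟨0, 1, ⟨by simp, by simp, by simp⟩, by simp [cylinder], fun φ _ => ⟨φ, by simp [fixing]⟩⟩
  have hsucc : ∀ t : List α, t.length = k + 1 →
      ∃ u i, t = u ++ [i] ∧ u.length = k ∧ (ψ u ++ [i]).length = ψ.level k + 1 := fun t ht => by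
    rcases List.eq_nil_or_concat t with rfl | ⟨u, i, rfl⟩
    · simp at ht
    · have hu : u.length = k := by simpa using ht
      exact ⟨u, i, by simp, hu, by simp [length_apply, hu]⟩
  obtain ⟨ψ', hcanonical, hmem, hprefix⟩ := exists_isCanonical_of_length ψ (k + 1) (ψ.level k + 1)
    (fun t ht => by
      rw [length_apply, Nat.lt_succ_iff]
      exact ψ.strictMono_level.monotone (Nat.lt_succ_iff.1 ht))
    (fun t ht => by
      obtain ⟨u, i, rfl, -, hlen⟩ := hsucc t ht
      exact hlen ▸ (ψ.append_singleton_prefix u i).length_le)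
  refine ⟨_, ψ', hcanonical, hmem, fun φ hφ => hcanonical.mem_cube_of_prefix
    (fun t ht => (hφ t ht).trans (hmem t ht).symm) fun t ht => ?_⟩
  obtain ⟨u, i, rfl, hu, hlen⟩ := hsucc t ht
  have hψ' : ψ' (u ++ [i]) = ψ u ++ [i] :=
    have hlen' := (hcanonical.length_eq _ ht).trans hlen.symm
    (List.prefix_of_prefix_length_le (hprefix _ ht) (ψ.append_singleton_prefix u i)
      hlen'.le).eq_of_length hlen'
  rw [hψ', ← hφ u (by omega)]
  exact φ.append_singleton_prefix u i

end Nonempty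

theorem exists_forall_mem_cube {n : ℕ} {Φ : ℕ → StrongEmbedding α}
    (hΦ : ∀ j, Φ (j + 1) ∈ cube (n + j) (Φ j)) : ∃ L, ∀ j, L ∈ cube (n + j) (Φ j) := by
  have hcube : ∀ {j m}, j ≤ m → Φ m ∈ cube (n + j) (Φ j) := fun {j m} hjm => by
    induction m, hjm using Nat.le_induction with
    | base => exact self_mem_cube _ _
    | succ m hjm ih => exact cube_subset_cube ih (cube_anti (by omega) _ (hΦ m))
  have hstable : ∀ {t : List α} {j m}, t.length < n + j → j ≤ m → Φ m t = Φ j t :=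
    fun ht hjm => cube_subset_cylinder _ _ (hcube hjm) _ ht
  have hlimit : ∀ {t : List α} {m}, t.length < m → Φ (t.length + 1) t = Φ m t :=
    fun ht => (hstable (by omega) ht).symm
  let L : StrongEmbedding α :=
    { toFun := fun t => Φ (t.length + 1) t
      length_congr' := fun {s t} hst => hst ▸ (Φ (s.length + 1)).length_congr hst
      append_singleton_prefix' := fun t i => by
        rw [hlimit (m := (t ++ [i]).length + 1) (by simp)]
        exact (Φ _).append_singleton_prefix t i }
  refine ⟨L, fun j => mem_cube_of_range_subset ?_ fun t ht => ?_⟩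
  · rintro _ ⟨t, rfl⟩
    change Φ (t.length + 1) t ∈ _
    rw [hlimit (m := max (t.length + 1) j) (by omega)]
    exact range_subset_of_mem_cube (hcube (le_max_right _ _)) ⟨t, rfl⟩
  · change Φ (t.length + 1) t = _
    rw [hlimit (m := max (t.length + 1) j) (by omega), hstable ht (le_max_right _ _)]

variable {ι : Type*} {Q : ι → Set (StrongEmbedding α)}

theorem exists_mem_cube_forall_mem_finite {N : ℕ} {J : Set ι} (hJ : J.Finite)
    (dense : ∀ i ∈ J, ∀ φ, ∃ ψ ∈ cube N φ, cube N ψ ⊆ Q i) (φ : StrongEmbedding α) :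
    ∃ ψ ∈ cube N φ, ∀ i ∈ J, cube N ψ ⊆ Q i := by
  induction J, hJ using Set.Finite.induction_on generalizing φ with
  | empty => exact ⟨φ, self_mem_cube N φ, by simp⟩
  | @insert a s _ _ ih =>
    obtain ⟨ψ, hψ, hψQ⟩ := ih (fun i hi => dense i (Set.mem_insert_of_mem a hi)) φ
    obtain ⟨χ, hχ, hχQ⟩ := dense a (Set.mem_insert a s) ψ
    refine ⟨χ, cube_subset_cube hψ hχ, ?_⟩
    rintro i (rfl | hi)
    · exact hχQ
    · exact (cube_subset_cube hχ).trans (hψQ i hi)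

theorem exists_mem_cube_forall {J : ℕ → Set ι} (hJ : ∀ N, (J N).Finite) (n : ℕ)
    (dense : ∀ N ≥ n, ∀ i ∈ J N, ∀ φ, ∃ ψ ∈ cube N φ, cube N ψ ⊆ Q i) (φ : StrongEmbedding α) :
    ∃ ψ ∈ cube n φ, ∀ N ≥ n, ∀ i ∈ J N, cube N ψ ⊆ Q i := by
  choose refinement hmem hQ using fun j =>
    exists_mem_cube_forall_mem_finite (hJ (n + j)) (dense (n + j) (Nat.le_add_right n j))
  let Φ : ℕ → StrongEmbedding α := fun j => Nat.rec φ refinement j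
  obtain ⟨L, hL⟩ := exists_forall_mem_cube (Φ := Φ) fun j => hmem j (Φ j)
  refine ⟨L, hL 0, fun N hN i hi => ?_⟩
  obtain ⟨j, rfl⟩ := Nat.exists_eq_add_of_le hN
  exact (cube_subset_cube (cube_anti (by omega) _ (hL (j + 1)))).trans (hQ j (Φ j) i hi)

theorem exists_mem_cube_forall_cube_mul_subset [Finite α] [Nonempty α]
    {Q : ℕ → ℕ → Set (StrongEmbedding α)}
    (dense : ∀ i k φ, ∃ ψ ∈ cube k φ, cube k ψ ⊆ Q i k) (n : ℕ) (φ : StrongEmbedding α) :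
    ∃ B ∈ cube n φ, ∀ k ≥ n, ∀ i ≤ k, ∀ ψ, ∃ ψ' ∈ cylinder k ψ,
      cylinder k ψ ⊆ cube k ψ' ∧ cube k (B * ψ') ⊆ Q i k := by
  obtain ⟨B, hB, hBQ⟩ := exists_mem_cube_forall
    (J := fun N => {x : ℕ × ℕ × StrongEmbedding α | x.1 ≤ x.2.1 ∧ IsCanonical x.2.1 N x.2.2})
    (Q := fun x => {C | cube x.2.1 (C * x.2.2) ⊆ Q x.1 x.2.1})
    (fun N => ((Set.finite_Iic N).prod (finite_setOf_isCanonical_prod N)).subset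
      fun x hx => ⟨hx.1.trans hx.2.le, hx.2⟩) n
    (by
      rintro N - ⟨i, k, ψ'⟩ ⟨-, hψ'⟩ φ
      obtain ⟨A, hA, hAQ⟩ := dense i k (φ * ψ')
      obtain ⟨C, hC, rfl⟩ := hψ'.exists_mul_eq_of_mem_cube_mul hA
      exact ⟨C, hC, fun D hD => (cube_subset_cube (hψ'.mul_mem_cube_mul_right hD)).trans hAQ⟩) φ
  refine ⟨B, hB, fun k hk i hi ψ => ?_⟩
  obtain ⟨N, ψ', hψ', hmem, hsubset⟩ := exists_isCanonical_cylinder_subset_cube ψ k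
  exact ⟨ψ', hmem, hsubset, hBQ N (hk.trans hψ'.le) (i, k, ψ') ⟨hi, hψ'⟩ (self_mem_cube N B)⟩

end StrongEmbedding

/-! ### The Carlson–Simpson theorem -/

/-- Words over `Λ` in which a variable, encoded by `none`, may occur. -/
abbrev VariableWord (Λ : Type*) := List (Option Λ)

namespace VariableWord

variable {Λ : Type*}

/-- The word obtained from `w` by substituting the letter `a` for the variable. -/
def substitute (a : Λ) (w : VariableWord Λ) : List Λ := w.map (·.getD a)

/-- The part of a variable word that precedes the first occurrence of the variable. -/
def leadingConstants : VariableWord Λ → List Λ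
  | some a :: w => a :: leadingConstants w
  | _ => []

theorem substitute_append (a : Λ) (v w : VariableWord Λ) :
    substitute a (v ++ w) = substitute a v ++ substitute a w :=
  List.map_append

theorem substitute_map_some (a : Λ) (x : List Λ) : substitute a (x.map some) = x := by
  simp [substitute]

theorem leadingConstants_map_some_append (x : List Λ) (w : VariableWord Λ) :
    leadingConstants (x.map some ++ w) = x ++ leadingConstants w := by
  induction x with
  | nil => rfl
  | cons a x ih => exact congrArg (a :: ·) ih

theorem leadingConstants_append_singleton_prefix (a : Λ) {w : VariableWord Λ} (hw : none ∈ w) :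
    leadingConstants w ++ [a] <+: substitute a w := by
  induction w with
  | nil => simp at hw
  | cons x w ih =>
    rcases x with _ | b
    · simp [leadingConstants, substitute]
    · exact (List.prefix_cons_inj b).2 (ih (by simpa using hw))

theorem map_substitute_congr {β : Type*} {h : Λ → β} {a a' : Λ} (haa' : h a = h a')
    (w : VariableWord Λ) : (substitute a w).map h = (substitute a' w).map h := by
  rw [substitute, substitute, List.map_map, List.map_map]
  refine List.map_congr_left fun o _ => ?_
  rcases o with _ | b
  · exact haa'
  · rfl

theorem exists_substitute_mono [Finite Λ] {κ : Type*} [Finite κ] (c : List Λ → κ) :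
    ∃ w : VariableWord Λ, none ∈ w ∧ ∀ a b : Λ, c (substitute a w) = c (substitute b w) := by
  obtain ⟨ι, _, hι⟩ := Combinatorics.Line.exists_mono_in_high_dimension Λ κ
  let word {β : Type _} (x : ι → β) : List β := (Finset.univ : Finset ι).toList.map x
  obtain ⟨l, color, hl⟩ := hι fun x => c (word x)
  obtain ⟨i, hi⟩ := l.proper
  have hsubstitute : ∀ a, c (substitute a (word l.idxFun)) = color := fun a => by
    rw [← hl a, substitute, List.map_map]
    rfl
  exact ⟨word l.idxFun, List.mem_map.2 ⟨i, by simp, hi⟩, fun a b =>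
    (hsubstitute a).trans (hsubstitute b).symm⟩

/-- The word at the node `e` of the tree generated by a sequence `W` of variable words: for
`e = a₀ ⋯ aₘ₋₁` it is `W₀(a₀) ⋯ Wₘ₋₁(aₘ₋₁)`, followed by the constants that open `Wₘ`. -/
def treeWord (W : ℕ → VariableWord Λ) (e : List Λ) : List Λ :=
  (e.mapIdx fun i a => substitute a (W i)).flatten ++ leadingConstants (W e.length)

theorem flatten_mapIdx_substitute_append_singleton (W : ℕ → VariableWord Λ) (e : List Λ) (a : Λ) :
    ((e ++ [a]).mapIdx fun i a => substitute a (W i)).flatten =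
      (e.mapIdx fun i a => substitute a (W i)).flatten ++ substitute a (W e.length) := by
  simp

theorem treeWord_append_singleton_prefix {W : ℕ → VariableWord Λ} (e : List Λ) (a : Λ)
    (hW : none ∈ W e.length) : treeWord W e ++ [a] <+: treeWord W (e ++ [a]) := by
  rw [treeWord, treeWord, flatten_mapIdx_substitute_append_singleton, List.append_assoc,
    List.append_assoc]
  exact (List.prefix_append_right_inj _).2
    ((leadingConstants_append_singleton_prefix a hW).trans (List.prefix_append _ _))

theorem map_treeWord_congr {β : Type*} {h : Λ → β} (W : ℕ → VariableWord Λ) {e e' : List Λ}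
    (hee' : e.map h = e'.map h) : (treeWord W e).map h = (treeWord W e').map h := by
  have hlen : e.length = e'.length := by simpa using congrArg List.length hee'
  rw [treeWord, treeWord, List.map_append, List.map_append, hlen, List.map_flatten,
    List.map_flatten]
  congr 2
  refine List.ext_getElem (by simpa using hlen) fun i hi hi' => ?_
  simp only [List.getElem_map, List.getElem_mapIdx]
  refine map_substitute_congr ?_ _
  have hi : i < e.length := by simpa using hi
  have hi' : i < e'.length := hlen ▸ hi
  simpa [hi, hi'] using congrArg (·[i]?) hee'

theorem length_treeWord_congr (W : ℕ → VariableWord Λ) {e e' : List Λ}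
    (h : e.length = e'.length) : (treeWord W e).length = (treeWord W e').length := by
  simpa using congrArg List.length (map_treeWord_congr (h := fun _ => ()) W (e := e) (e' := e')
    (by simp [h]))

/-- `s` can be continued, along most variable words, to a word of colour `b`. -/
def IsGood {κ : Type*} (c : List Λ → κ) (b : κ) (v : Filter (VariableWord Λ)) (s : List Λ) : Prop :=
  ∀ᶠ w in v, c (s ++ leadingConstants w) = b

theorem exists_variableWord_extending_isGood [Finite Λ] {κ : Type*} {c : List Λ → κ} {b : κ}
    {v : Filter (VariableWord Λ)} [v.NeBot] (hvar : ∀ᶠ w : VariableWord Λ in v, none ∈ w)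
    (hext : ∀ s, IsGood c b v s → ∀ a, ∀ᶠ w in v, IsGood c b v (s ++ substitute a w))
    {F : Set (List Λ)} (hF : F.Finite) (hgood : ∀ s ∈ F, IsGood c b v s) :
    ∃ w : VariableWord Λ, none ∈ w ∧ ∀ s ∈ F, c (s ++ leadingConstants w) = b ∧
      ∀ a, IsGood c b v (s ++ substitute a w) := by
  refine (hvar.and ((Filter.eventually_all_finite hF).2 fun s hs => ?_)).exists
  exact (hgood s hs).and (Filter.eventually_all.2 fun a => hext s (hgood s hs) a)

theorem exists_seq_variableWord_of_isGood [Finite Λ] {κ : Type*} {c : List Λ → κ} {b : κ}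
    {v : Filter (VariableWord Λ)} [v.NeBot] (hvar : ∀ᶠ w : VariableWord Λ in v, none ∈ w)
    (hext : ∀ s, IsGood c b v s → ∀ a, ∀ᶠ w in v, IsGood c b v (s ++ substitute a w))
    (hnil : IsGood c b v []) :
    ∃ W : ℕ → VariableWord Λ, (∀ n, none ∈ W n) ∧ ∀ e, c (treeWord W e) = b := by
  choose V hVvar hV using fun F : {F : Set (List Λ) // F.Finite ∧ ∀ s ∈ F, IsGood c b v s} =>
    exists_variableWord_extending_isGood hvar hext F.2.1 F.2.2
  let next (F : {F : Set (List Λ) // F.Finite ∧ ∀ s ∈ F, IsGood c b v s}) :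
      {F : Set (List Λ) // F.Finite ∧ ∀ s ∈ F, IsGood c b v s} :=
    ⟨Set.image2 (fun s a => s ++ substitute a (V F)) F.1 Set.univ,
      F.2.1.image2 _ Set.finite_univ, Set.forall_mem_image2.2 fun s hs a _ => (hV F s hs).2 a⟩
  let P (n : ℕ) := next^[n] ⟨{[]}, Set.finite_singleton _, by simpa using hnil⟩
  have hmem : ∀ e : List Λ, (e.mapIdx fun i a => substitute a (V (P i))).flatten ∈
      (P e.length).1 := fun e => by
    induction e using List.reverseRecOn with
    | nil => rfl
    | append_singleton e a ih =>
      rw [flatten_mapIdx_substitute_append_singleton (fun i => V (P i)), List.length_append]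
      simp only [P, List.length_singleton, Function.iterate_succ_apply']
      exact Set.mem_image2_of_mem ih (Set.mem_univ a)
  exact ⟨fun n => V (P n), fun n => hVvar _, fun e => (hV _ _ (hmem e)).1⟩

section Ultrafilter

open Filter

/-- Words form a semigroup under concatenation. -/
abbrev appendSemigroup (β : Type*) : Semigroup (List β) where
  mul := (· ++ ·)
  mul_assoc := List.append_assoc

attribute [local instance] appendSemigroup Ultrafilter.mul Ultrafilter.semigroup

theorem ultrafilter_map_map_mul {L M N : Type*} [Mul M] [Mul N] {e : L → M} {f : M → N}
    {g : L → N} {h : M → N} (hf : ∀ x y, f (e x * y) = g x * h y) (U : Ultrafilter L)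
    (V : Ultrafilter M) : (U.map e * V).map f = U.map g * V.map h := by
  refine Ultrafilter.coe_injective (Filter.ext fun s => ?_)
  change (∀ᶠ x in U, ∀ᶠ y in V, f (e x * y) ∈ s) ↔ ∀ᶠ x in U, ∀ᶠ y in V, g x * h y ∈ s
  simp only [hf]

theorem ultrafilter_continuous_map {M N : Type*} (f : M → N) :
    Continuous (Ultrafilter.map f) :=
  ultrafilterBasis_is_basis.continuous_iff.2 <| Set.forall_mem_range.mpr fun s =>
    ultrafilter_isOpen_basic (f ⁻¹' s)

theorem ultrafilter_map_substitute_mul (a : Λ) (v w : Ultrafilter (VariableWord Λ)) :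
    (v * w).map (substitute a) = v.map (substitute a) * w.map (substitute a) := by
  simpa only [Ultrafilter.map_id] using
    ultrafilter_map_map_mul (e := id) (fun x y => substitute_append a x y) v w

/-- The ultrafilters on variable words that concentrate on words in which the variable occurs and
have the same image under all substitutions. -/
def homogeneousUltrafilters (Λ : Type*) : Set (Ultrafilter (VariableWord Λ)) :=
  {v | (∀ᶠ w : VariableWord Λ in (v : Filter (VariableWord Λ)), none ∈ w) ∧
    ∀ a b : Λ, v.map (substitute a) = v.map (substitute b)}

theorem isClosed_homogeneousUltrafilters : IsClosed (homogeneousUltrafilters Λ) := by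
  have hinter : homogeneousUltrafilters Λ = {v | {w | none ∈ w} ∈ v} ∩
      ⋂ (a : Λ) (b : Λ), {v | v.map (substitute a) = v.map (substitute b)} := by
    ext v
    simp only [homogeneousUltrafilters, Set.mem_inter_iff, Set.mem_iInter]
    rfl
  rw [hinter]
  exact (ultrafilter_isClosed_basic _).inter <| isClosed_iInter fun a => isClosed_iInter fun b =>
    isClosed_eq (ultrafilter_continuous_map _) (ultrafilter_continuous_map _)

theorem mul_mem_homogeneousUltrafilters {v w : Ultrafilter (VariableWord Λ)}
    (hv : v ∈ homogeneousUltrafilters Λ) (hw : w ∈ homogeneousUltrafilters Λ) :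
    v * w ∈ homogeneousUltrafilters Λ := by
  refine ⟨?_, fun a b => ?_⟩
  · rw [Ultrafilter.eventually_mul]
    filter_upwards [hv.1] with x hx
    exact Eventually.of_forall fun y => List.mem_append_left y hx
  · rw [ultrafilter_map_substitute_mul, ultrafilter_map_substitute_mul, hv.2 a b, hw.2 a b]

theorem nonempty_homogeneousUltrafilters [Finite Λ] : (homogeneousUltrafilters Λ).Nonempty := by
  obtain ⟨v, hv⟩ : (⋂ S : Set (List Λ), {v : Ultrafilter (VariableWord Λ) |
      {w | none ∈ w ∧ ∀ a b : Λ, substitute a w ∈ S → substitute b w ∈ S} ∈ v}).Nonempty := by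
    refine CompactSpace.iInter_nonempty (fun S => ultrafilter_isClosed_basic _) fun F => ?_
    obtain ⟨w, hw, hmono⟩ := exists_substitute_mono (κ := F → Prop) fun x S => x ∈ S.1
    refine ⟨pure w, Set.mem_iInter₂.2 fun S hS => Ultrafilter.mem_pure.2 ⟨hw, fun a b => ?_⟩⟩
    exact (congrFun (hmono a b) ⟨S, hS⟩).to_iff.1
  rw [Set.mem_iInter] at hv
  refine ⟨v, ?_, fun a b => Ultrafilter.coe_le_coe.1 fun S hS => ?_⟩
  · filter_upwards [hv ∅] with w hw using hw.1
  · change ∀ᶠ w in v, substitute a w ∈ S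
    have hb : ∀ᶠ w in v, substitute b w ∈ S := hS
    filter_upwards [hv S, hb] with w hw using hw.2 b a

theorem exists_ultrafilter_pair (Λ : Type*) [Finite Λ] [Nonempty Λ] :
    ∃ (u : Ultrafilter (List Λ)) (v : Ultrafilter (VariableWord Λ)),
      (∀ᶠ w : VariableWord Λ in (v : Filter (VariableWord Λ)), none ∈ w) ∧
      (∀ a, v.map (substitute a) = u) ∧ u * v.map leadingConstants = v.map leadingConstants := by
  obtain ⟨v, hv, hidem⟩ := exists_idempotent_in_compact_subsemigroup
    Ultrafilter.continuous_mul_left (homogeneousUltrafilters Λ) nonempty_homogeneousUltrafilters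
    isClosed_homogeneousUltrafilters.isCompact
    fun _ hx _ hy => mul_mem_homogeneousUltrafilters hx hy
  obtain ⟨u, hu⟩ : ∃ u, ∀ a, v.map (substitute a) = u :=
    ⟨v.map (substitute (Classical.arbitrary Λ)), fun a => hv.2 a _⟩
  have hu_idem : u * u = u := by
    rw [← hu (Classical.arbitrary Λ), ← ultrafilter_map_substitute_mul, hidem]
  have hleading :
      (u.map (List.map some) * v).map leadingConstants = u * v.map leadingConstants := by
    simpa only [Ultrafilter.map_id] using
      ultrafilter_map_map_mul (g := id) leadingConstants_map_some_append u v
  refine ⟨u, u.map (List.map some) * v, ?_, fun a => ?_, ?_⟩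
  · rw [Ultrafilter.eventually_mul]
    exact Eventually.of_forall fun x => by
      filter_upwards [hv.1] with w hw using List.mem_append_right x hw
  · have hsubstitute : ∀ (x : List Λ) y, substitute a (x.map some ++ y) = x ++ substitute a y :=
      fun x y => by rw [substitute_append, substitute_map_some]
    rw [ultrafilter_map_map_mul (g := id) hsubstitute, Ultrafilter.map_id, hu, hu_idem]
  · rw [hleading, ← mul_assoc, hu_idem]

theorem exists_forall_treeWord_eq [Finite Λ] [Nonempty Λ] {κ : Type*} [Finite κ]
    (c : List Λ → κ) :
    ∃ (W : ℕ → VariableWord Λ) (b : κ), (∀ n, none ∈ W n) ∧ ∀ e, c (treeWord W e) = b := by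
  obtain ⟨u, v, hvar, hsubstitute, hmul⟩ := exists_ultrafilter_pair Λ
  obtain ⟨b, hb⟩ := Ultrafilter.eq_pure_of_finite ((v.map leadingConstants).map c)
  have hnil : IsGood c b v [] := by
    have : {b} ∈ (v.map leadingConstants).map c := hb ▸ Ultrafilter.mem_pure.2 rfl
    exact this
  have hext : ∀ s, IsGood c b v s → ∀ a, ∀ᶠ w in (v : Filter (VariableWord Λ)),
      IsGood c b v (s ++ substitute a w) := fun s hs a => by
    have hs' : {x | c (s ++ x) = b} ∈ v.map (substitute a) * v.map leadingConstants := by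
      rw [hsubstitute a, hmul]
      exact hs
    simp only [IsGood, List.append_assoc]
    exact hs'
  obtain ⟨W, hW, hc⟩ := exists_seq_variableWord_of_isGood hvar hext hnil
  exact ⟨W, b, hW, hc⟩

end Ultrafilter

end VariableWord

/-! ### Completely Ramsey sets -/

namespace StrongEmbedding

section Pigeonhole

open VariableWord

variable {α : Type*} [Nonempty α] {N : ℕ}

/-- The letters used to encode a word above each of the nodes of level `N` by a single word. -/
abbrev LevelLetter (α : Type*) (N : ℕ) := {w : List α // w.length = N} → α

/-- The component at `w` of a letter, with an arbitrary value if `w` is not on level `N`. -/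
noncomputable def component (w : List α) (a : LevelLetter α N) : α :=
  open scoped Classical in if hw : w.length = N then a ⟨w, hw⟩ else Classical.arbitrary α

theorem component_of_length {w : List α} (hw : w.length = N) (a : LevelLetter α N) :
    component w a = a ⟨w, hw⟩ :=
  dif_pos hw

/-- The strong embedding that inserts the word `e.map (component w)` above each node `w` of
level `N`. -/
noncomputable def insertWord (e : List (LevelLetter α N)) : StrongEmbedding α :=
  extendAbove N (fun w r => e.map (component w) ++ r) (fun _ _ hr => by simp [hr])
    (fun w r i _ => by simp)

/-- The strong embedding that sends `w ++ r`, for `w` on level `N`, to the component at `w` of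
the tree of words generated by `W`. -/
noncomputable def ofVariableWords (W : ℕ → VariableWord (LevelLetter α N))
    (hW : ∀ n, none ∈ W n) : StrongEmbedding α :=
  extendAbove N (fun w r => (treeWord W (r.map (Function.const _))).map (component w))
    (fun _ _ hr => by
      rw [List.length_map, List.length_map]
      exact length_treeWord_congr W (by simp [hr]))
    (fun w r i hw => by
      have h := (treeWord_append_singleton_prefix (r.map (Function.const _)) (Function.const _ i)
        (hW _)).map (component w)
      simpa [component_of_length hw] using h)

theorem exists_insertWord_mem_cylinder {χ : StrongEmbedding α} (hχ : χ ∈ fixing N) :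
    ∃ e : List (LevelLetter α N), χ ∈ cylinder (N + 1) (insertWord e) := by
  choose! d hd using fun (t : List α) (ht : t.length = N) => prefix_apply_of_mem_fixing hχ ht.le
  have hlength : ∀ t : List α, t.length = N → (d t).length = χ.level N - N := fun t ht => by
    have := congrArg List.length (hd t ht)
    rw [List.length_append, length_apply, ht] at this
    omega
  refine ⟨List.ofFn fun (j : Fin (χ.level N - N)) t => (d t.1)[j]'((hlength _ t.2).symm ▸ j.2),
    fun t ht => ?_⟩
  rcases Nat.lt_succ_iff_lt_or_eq.1 ht with ht | ht
  · rw [hχ t ht]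
    exact (extendAbove_mem_fixing t ht).symm
  · conv_rhs => rw [← t.append_nil]
    rw [insertWord, extendAbove_apply_append ht, ← hd t ht, List.append_nil]
    refine congrArg _ (List.ext_getElem (by simp [hlength t ht]) fun i hi hi' => ?_)
    simp [component_of_length ht]

theorem ofVariableWords_mul_mem_cylinder {W : ℕ → VariableWord (LevelLetter α N)}
    {hW : ∀ n, none ∈ W n} {χ : StrongEmbedding α} (hχ : χ ∈ fixing N)
    {e : List (LevelLetter α N)} (he : χ ∈ cylinder (N + 1) (insertWord e)) :
    ofVariableWords W hW * χ ∈ cylinder (N + 1) (insertWord (treeWord W e)) := by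
  intro t ht
  rcases Nat.lt_succ_iff_lt_or_eq.1 ht with ht' | ht'
  · rw [mul_apply, hχ t ht']
    exact (extendAbove_mem_fixing t ht').trans (extendAbove_mem_fixing t ht').symm
  · have hinsert : ∀ e : List (LevelLetter α N), insertWord e t = t ++ e.map (component t) :=
      fun e => by
        conv_lhs => rw [← t.append_nil]
        rw [insertWord, extendAbove_apply_append ht', List.append_nil]
    rw [mul_apply, he t ht, hinsert, hinsert, ofVariableWords, extendAbove_apply_append ht']
    refine congrArg _ (map_treeWord_congr W ?_)
    simp [component_of_length ht', Function.comp_def]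

theorem exists_mem_cube_subset_or_subset_compl_of_cylinder [Finite α] {Y : Set (StrongEmbedding α)}
    (hY : ∀ ψ ∈ Y, cylinder (N + 1) ψ ⊆ Y) (φ : StrongEmbedding α) :
    ∃ ψ ∈ cube N φ, cube N ψ ⊆ Y ∨ cube N ψ ⊆ Yᶜ := by
  have : Finite {w : List α // w.length = N} := List.finite_length_eq α N
  obtain ⟨W, b, hW, hb⟩ := exists_forall_treeWord_eq
    fun e : List (LevelLetter α N) => φ * insertWord e ∈ Y
  refine ⟨φ * ofVariableWords W hW, mul_mem_cube φ extendAbove_mem_fixing, ?_⟩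
  have hiff : ∀ ψ ∈ cube N (φ * ofVariableWords W hW), ψ ∈ Y ↔ b := by
    rintro _ ⟨χ, hχ, rfl⟩
    obtain ⟨e, he⟩ := exists_insertWord_mem_cylinder hχ
    have hmem := mul_mem_cylinder_mul φ (ofVariableWords_mul_mem_cylinder (hW := hW) hχ he)
    rw [← hb e, mul_assoc]
    exact ⟨fun h => hY _ h (fun t ht => (hmem t ht).symm), fun h => hY _ h hmem⟩
  by_cases h : b
  · exact Or.inl fun ψ hψ => (hiff ψ hψ).2 h
  · exact Or.inr fun ψ hψ hψY => h ((hiff ψ hψ).1 hψY)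

end Pigeonhole

variable {α : Type*}

/-- The set `X` is completely Ramsey: below every cube there is a cube that is contained in `X` or
disjoint from it. -/
def IsCompletelyRamsey (X : Set (StrongEmbedding α)) : Prop :=
  ∀ n φ, ∃ ψ ∈ cube n φ, cube n ψ ⊆ X ∨ cube n ψ ⊆ Xᶜ

/-- The stem of `ψ` below level `k` rejects `X`: no cube with this stem is contained in `X`. -/
def Rejects (X : Set (StrongEmbedding α)) (k : ℕ) (ψ : StrongEmbedding α) : Prop :=
  ∀ ψ₂ ∈ cylinder k ψ, ¬cube k ψ₂ ⊆ X

variable {X : Set (StrongEmbedding α)} {n k N : ℕ}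

theorem Rejects.of_mem_cylinder {ψ ψ₂ : StrongEmbedding α} (h : Rejects X k ψ)
    (hmem : ψ₂ ∈ cylinder k ψ) : Rejects X k ψ₂ := by
  rwa [Rejects, cylinder_eq_cylinder hmem]

theorem IsCompletelyRamsey.compl (hX : IsCompletelyRamsey X) : IsCompletelyRamsey Xᶜ := by
  intro n φ
  obtain ⟨ψ, hψ, h⟩ := hX n φ
  exact ⟨ψ, hψ, (compl_compl X).symm ▸ h.symm⟩

section Forcing

variable [Finite α] [Nonempty α]

theorem exists_mem_cube_forall_cylinder_subset_or_rejects (X : Set (StrongEmbedding α)) (n : ℕ)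
    (φ : StrongEmbedding α) : ∃ B ∈ cube n φ, ∀ k ≥ n, ∀ ψ,
      cylinder k ψ ⊆ (B * ·) ⁻¹' X ∨ Rejects ((B * ·) ⁻¹' X) k ψ := by
  obtain ⟨B, hB, hBQ⟩ := exists_mem_cube_forall_cube_mul_subset
    (Q := fun _ k => {C | cube k C ⊆ X ∨ ∀ D ∈ cube k C, ¬cube k D ⊆ X})
    (fun _ k φ => by
      by_cases h : ∃ ψ ∈ cube k φ, cube k ψ ⊆ X
      · obtain ⟨ψ, hψ, hψX⟩ := h
        exact ⟨ψ, hψ, fun D hD => Or.inl ((cube_subset_cube hD).trans hψX)⟩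
      · push Not at h
        exact ⟨φ, self_mem_cube k φ, fun D hD =>
          Or.inr fun E hE => h E (cube_subset_cube hD hE)⟩) n φ
  refine ⟨B, hB, fun k hk ψ => ?_⟩
  obtain ⟨ψ', -, hsubset, hQ⟩ := hBQ k hk k le_rfl ψ
  refine (hQ (self_mem_cube k _)).imp (fun h ψ₂ hψ₂ => ?_) fun h ψ₂ hψ₂ => ?_
  · exact h (mul_mem_cube_mul B (hsubset hψ₂))
  · rw [← cube_mul_subset_iff]
    exact h _ (mul_mem_cube_mul B (hsubset hψ₂))

theorem IsCanonical.exists_mem_cube_forall_not_cylinder_subset {ψ' C : StrongEmbedding α}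
    (h : IsCanonical k N ψ') (hC : Rejects X k (C * ψ')) :
    ∃ D ∈ cube N C, ∀ E ∈ cube N D, ¬cylinder (k + 1) (E * ψ') ⊆ X := by
  have hcylinder : ∀ E, ∀ E₂ ∈ cylinder (N + 1) E, E₂ * ψ' ∈ cylinder (k + 1) (E * ψ') :=
    fun E E₂ hE₂ t ht => hE₂ _ <| Nat.lt_succ_of_le <|
      (Nat.lt_succ_iff_lt_or_eq.1 ht).elim (fun ht => (h.length_lt t ht).le)
        fun ht => (h.length_eq t ht).le
  obtain ⟨D, hD, hsubset | hsubset⟩ := exists_mem_cube_subset_or_subset_compl_of_cylinder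
    (Y := {E | cylinder (k + 1) (E * ψ') ⊆ X})
    (fun E hE E₂ hE₂ => (cylinder_eq_cylinder (hcylinder E E₂ hE₂)).subset.trans hE) C
  · refine absurd (fun A hA => ?_) (hC _ (h.mem_cylinder_mul (cube_subset_cylinder N C hD)))
    obtain ⟨E, hE, rfl⟩ := h.exists_mul_eq_of_mem_cube_mul hA
    exact hsubset hE (self_mem_cylinder _ _)
  · exact ⟨D, hD, hsubset⟩

theorem Rejects.exists_mem_cube_forall_rejects {φ : StrongEmbedding α} (hφ : Rejects X n φ)
    (hdichotomy : ∀ k ≥ n, ∀ ψ, cylinder k ψ ⊆ X ∨ Rejects X k ψ) :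
    ∃ C ∈ cube n φ, ∀ k ≥ n, ∀ ψ ∈ cube n C, Rejects X k ψ := by
  obtain ⟨C, hC, hCQ⟩ := exists_mem_cube_forall finite_setOf_isCanonical_prod
    (Q := fun x => {C | Rejects X x.1 (C * x.2) → ¬cylinder (x.1 + 1) (C * x.2) ⊆ X}) n
    (fun N _ ⟨k, ψ'⟩ hψ' C => by
      by_cases hrejects : Rejects X k (C * ψ')
      · obtain ⟨D, hD, h⟩ := hψ'.exists_mem_cube_forall_not_cylinder_subset hrejects
        exact ⟨D, hD, fun E hE _ => h E hE⟩
      · refine ⟨C, self_mem_cube N C, fun E hE hE' => absurd (hE'.of_mem_cylinder ?_) hrejects⟩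
        exact fun t ht => (hψ'.mem_cylinder_mul (cube_subset_cylinder N C hE) t ht).symm) φ
  refine ⟨C, hC, fun k hk => ?_⟩
  induction k, hk using Nat.le_induction with
  | base =>
    intro ψ hψ
    exact hφ.of_mem_cylinder (cube_subset_cylinder n φ (cube_subset_cube hC hψ))
  | succ k hk ih =>
    rintro _ ⟨χ, hχ, rfl⟩
    refine (hdichotomy (k + 1) (by omega) _).resolve_left ?_
    obtain ⟨N, ψ', hψ', -, hsubset⟩ := exists_isCanonical_cylinder_subset_cube χ k
    obtain ⟨θ, hθ, rfl⟩ := hψ'.mem_cube_iff.1 (hsubset (self_mem_cylinder k χ))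
    have hrejects := ih _ (mul_mem_cube C hχ)
    rw [← mul_assoc] at hrejects ⊢
    exact hCQ N (hk.trans hψ'.le) (k, ψ') hψ' (mul_mem_cube C hθ) hrejects

theorem isCompletelyRamsey_of_cylinder (hX : ∀ φ ∈ X, ∃ m, cylinder m φ ⊆ X) :
    IsCompletelyRamsey X := by
  intro n φ
  obtain ⟨B, hB, hdichotomy⟩ := exists_mem_cube_forall_cylinder_subset_or_rejects X n φ
  rcases hdichotomy n le_rfl 1 with haccepts | hrejects
  · refine ⟨B, hB, Or.inl ?_⟩
    rw [← mul_one B, cube_mul_subset_iff]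
    exact (cube_subset_cylinder n 1).trans haccepts
  · obtain ⟨C, hC, hCrejects⟩ := hrejects.exists_mem_cube_forall_rejects hdichotomy
    refine ⟨B * C, cube_subset_cube hB (mul_one B ▸ mul_mem_cube_mul B hC), Or.inr ?_⟩
    rw [cube_mul_subset_iff]
    intro ψ hψ hψX
    obtain ⟨m, hm⟩ := hX _ hψX
    refine hCrejects (max m n) (le_max_right m n) ψ hψ ψ (self_mem_cylinder _ ψ) fun ψ₂ hψ₂ => ?_
    exact hm (mul_mem_cylinder_mul B
      (cylinder_anti (le_max_left m n) ψ (cube_subset_cylinder _ ψ hψ₂)))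

theorem IsCompletelyRamsey.iUnion {X : ℕ → Set (StrongEmbedding α)}
    (hX : ∀ i, IsCompletelyRamsey (X i)) : IsCompletelyRamsey (⋃ i, X i) := by
  intro n φ
  obtain ⟨B, hB, hBQ⟩ := exists_mem_cube_forall_cube_mul_subset
    (Q := fun i k => {C | cube k C ⊆ X i ∨ cube k C ⊆ (X i)ᶜ})
    (fun i k φ => by
      obtain ⟨ψ, hψ, h⟩ := hX i k φ
      exact ⟨ψ, hψ, fun D hD => h.imp (cube_subset_cube hD).trans (cube_subset_cube hD).trans⟩) n φ
  obtain ⟨C, hC, hinterior⟩ := isCompletelyRamsey_of_cylinder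
    (X := {ψ | ∃ m, cylinder m ψ ⊆ (B * ·) ⁻¹' ⋃ i, X i})
    (fun ψ ⟨m, hm⟩ => ⟨m, fun ψ₂ hψ₂ => ⟨m, (cylinder_eq_cylinder hψ₂).subset.trans hm⟩⟩) n 1
  refine ⟨B * C, cube_subset_cube hB (mul_one B ▸ mul_mem_cube_mul B hC), ?_⟩
  rw [cube_mul_subset_iff, cube_mul_subset_iff]
  refine hinterior.imp (fun h ψ hψ => ?_) fun h ψ hψ hmem => h hψ ?_
  · obtain ⟨m, hm⟩ := h hψ
    exact hm (self_mem_cylinder m ψ)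
  · obtain ⟨i, hi⟩ := Set.mem_iUnion.1 hmem
    obtain ⟨ψ', -, hsubset, hQ⟩ := hBQ (max n i) (le_max_left n i) i (le_max_right n i) ψ
    have hψ' := mul_mem_cube_mul B (hsubset (self_mem_cylinder _ ψ))
    have hXi := (hQ (self_mem_cube _ _)).resolve_right fun h => h hψ' hi
    exact ⟨max n i, fun ψ₂ hψ₂ =>
      Set.mem_iUnion_of_mem i (hXi (mul_mem_cube_mul B (hsubset hψ₂)))⟩

end Forcing

theorem IsCompletelyRamsey.preimage_mul_right [Nonempty α] (hX : IsCompletelyRamsey X)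
    (ψ : StrongEmbedding α) : IsCompletelyRamsey ((· * ψ) ⁻¹' X) := by
  intro n φ
  obtain ⟨k, ψ', hψ', hψ⟩ := exists_isCanonical_mem_cube ψ n
  obtain ⟨A, hA, h⟩ := hX k (φ * ψ')
  obtain ⟨C, hC, rfl⟩ := hψ'.exists_mul_eq_of_mem_cube_mul hA
  have hmul : ∀ D ∈ cube n C, D * ψ ∈ cube k (C * ψ') := fun D hD =>
    cube_subset_cube (hψ'.mul_mem_cube_mul_right hD) (mul_mem_cube_mul D hψ)
  exact ⟨C, hC, h.imp (fun h D hD => h (hmul D hD)) fun h D hD => h (hmul D hD)⟩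

section Measurable

variable [Finite α] [Nonempty α]

/-- The σ-algebra of completely Ramsey sets; it contains the Borel sets of the topology of pointwise
convergence. -/
instance : MeasurableSpace (StrongEmbedding α) where
  MeasurableSet' := IsCompletelyRamsey
  measurableSet_empty := isCompletelyRamsey_of_cylinder (by simp)
  measurableSet_compl _ := IsCompletelyRamsey.compl
  measurableSet_iUnion _ := IsCompletelyRamsey.iUnion

theorem exists_mem_cube_subset_or_subset_compl (hX : MeasurableSet X) (n : ℕ)
    (φ : StrongEmbedding α) : ∃ ψ ∈ cube n φ, cube n ψ ⊆ X ∨ cube n ψ ⊆ Xᶜ :=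
  hX n φ

theorem measurable_mul_right (ψ : StrongEmbedding α) :
    Measurable fun φ : StrongEmbedding α => φ * ψ :=
  fun _ hX => IsCompletelyRamsey.preimage_mul_right hX ψ

theorem measurableSet_setOf_apply_eq (t x : List α) :
    MeasurableSet {φ : StrongEmbedding α | φ t = x} :=
  isCompletelyRamsey_of_cylinder fun _ hφ =>
    ⟨t.length + 1, fun _ hψ => (hψ t (Nat.lt_succ_self _)).trans hφ⟩

theorem measurableSet_setOf_mem_range (x : List α) :
    MeasurableSet {φ : StrongEmbedding α | x ∈ Set.range φ} := by
  simp only [Set.mem_range, Set.ofPred_exists]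
  exact MeasurableSet.iUnion fun t => measurableSet_setOf_apply_eq t x

end Measurable

end StrongEmbedding

/-! ### Maps of strong embeddings -/

namespace StrongEmbedding

variable {α : Type*}

theorem mem_range_of_prefix_of_length_eq (ψ : StrongEmbedding α) {w s t : List α}
    (hw : w <+: ψ s) (ht : (ψ t).length = w.length) : w ∈ Set.range ψ := by
  have hle : t.length ≤ s.length := ψ.length_le_length_iff.1 (ht.trans_le hw.length_le)
  obtain ⟨u, r, rfl, hu⟩ := exists_eq_append_of_le_length hle
  have hlength : (ψ u).length = w.length := (ψ.length_congr hu).trans ht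
  exact ⟨u, (List.prefix_of_prefix_length_le (ψ.mono (List.prefix_append u r)) hw
    hlength.le).eq_of_length hlength⟩

theorem exists_le_length_apply_notMem_range [Nontrivial α] {φ ψ : StrongEmbedding α}
    (h : ¬Set.range φ ⊆ Set.range ψ) (m : ℕ) :
    ∃ t : List α, m ≤ t.length ∧ φ t ∉ Set.range ψ := by
  induction m with
  | zero =>
    obtain ⟨_, ⟨t, rfl⟩, ht⟩ := Set.not_subset.1 h
    exact ⟨t, Nat.zero_le _, ht⟩
  | succ m ih =>
    obtain ⟨t, ht, hnotMem⟩ := ih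
    by_contra! hmem
    obtain ⟨i, j, hij⟩ := exists_pair_ne α
    obtain ⟨a, ha⟩ := hmem (t ++ [i]) (by simpa using ht)
    obtain ⟨b, hb⟩ := hmem (t ++ [j]) (by simpa using ht)
    exact hnotMem <| ψ.mem_range_of_branching hij (ha ▸ φ.append_singleton_prefix t i)
      (hb ▸ φ.append_singleton_prefix t j)

section InsertLetter

/-- The strong embedding that inserts the letter `ε w` above each node `w` of level `N`. -/
def insertLetter (N : ℕ) (ε : List α → α) : StrongEmbedding α :=
  extendAbove N (fun w r => ε w :: r) (fun _ _ hr => by simp [hr]) (fun w r i _ => by simp)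

theorem insertLetter_mem_fixing (N : ℕ) (ε : List α → α) : insertLetter N ε ∈ fixing N :=
  extendAbove_mem_fixing

theorem insertLetter_apply_append {N : ℕ} (ε : List α → α) {w : List α} (hw : w.length = N)
    (r : List α) : insertLetter N ε (w ++ r) = w ++ ε w :: r :=
  extendAbove_apply_append hw r

theorem insertLetter_apply_self (ε : List α → α) (w : List α) :
    insertLetter w.length ε w = w ++ [ε w] := by
  simpa using insertLetter_apply_append ε (rfl : w.length = w.length) []

theorem insertLetter_mul_congr {N : ℕ} {ε ε' : List α → α} {ψ : StrongEmbedding α}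
    (h : ∀ w s, w.length = N → w <+: ψ s → ε w = ε' w) :
    insertLetter N ε * ψ = insertLetter N ε' * ψ := by
  refine ext_apply fun s => ?_
  rw [mul_apply, mul_apply]
  rcases lt_or_ge (ψ s).length N with hs | hs
  · rw [insertLetter_mem_fixing N ε _ hs, insertLetter_mem_fixing N ε' _ hs]
  · obtain ⟨w, r, hwr, hw⟩ := exists_eq_append_of_le_length hs
    rw [hwr, insertLetter_apply_append ε hw, insertLetter_apply_append ε' hw,
      h w s hw ⟨r, hwr.symm⟩]

theorem insertLetter_succ_mul_eq {N : ℕ} {ε : List α → α} {ψ : StrongEmbedding α}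
    (hlevel : ∀ s, (ψ s).length ≠ N)
    (hε : ∀ w s i, w.length = N → w ++ [i] <+: ψ s → ε w = i) :
    insertLetter (N + 1) (fun w => ε (w.take N)) * ψ = insertLetter N ε * ψ := by
  refine ext_apply fun s => ?_
  rw [mul_apply, mul_apply]
  rcases (hlevel s).lt_or_gt with hs | hs
  · rw [insertLetter_mem_fixing N ε _ hs, insertLetter_mem_fixing _ _ _ (Nat.lt_succ_of_lt hs)]
  · obtain ⟨w, i, r, hwr, rfl⟩ := exists_eq_append_cons_of_lt_length hs
    have hi : ε w = i := hε w s i rfl (by simp [hwr])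
    rw [hwr, insertLetter_apply_append ε rfl, List.append_cons,
      insertLetter_apply_append _ (by simp)]
    simp [hi]

theorem exists_forall_eq_of_append_singleton_prefix [Nonempty α] {N : ℕ} {ψ : StrongEmbedding α}
    (hlevel : ∀ s, (ψ s).length ≠ N) :
    ∃ ε : List α → α, ∀ w s i, w.length = N → w ++ [i] <+: ψ s → ε w = i := by
  classical
  refine ⟨fun w => if h : ∃ i s, w ++ [i] <+: ψ s then h.choose else Classical.arbitrary α,
    fun w s i hw hi => ?_⟩
  have hex : ∃ i s, w ++ [i] <+: ψ s := ⟨i, s, hi⟩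
  obtain ⟨s', hs'⟩ := hex.choose_spec
  refine (dif_pos hex).trans ?_
  by_contra hne
  obtain ⟨t, rfl⟩ := ψ.mem_range_of_branching hne hs' hi
  exact hlevel t hw

/-- If `p` is not on `ψ`, then the level of `p` can be moved without moving `ψ`: insert a letter at
that level which is invisible to `ψ`. -/
theorem exists_mem_fixing_mul_eq_apply_ne [Nontrivial α] {ψ : StrongEmbedding α} {p : List α}
    (hp : p ∉ Set.range ψ) :
    ∃ θ₁ ∈ fixing p.length, ∃ θ₂ ∈ fixing p.length, θ₁ * ψ = θ₂ * ψ ∧ θ₁ p ≠ θ₂ p := by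
  classical
  by_cases hlevel : ∃ t, (ψ t).length = p.length
  · obtain ⟨t, ht⟩ := hlevel
    obtain ⟨i, j, hij⟩ := exists_pair_ne α
    refine ⟨_, insertLetter_mem_fixing _ fun _ => i,
      _, insertLetter_mem_fixing _ fun w => if w = p then j else i,
      insertLetter_mul_congr fun w s hw hws => ?_, ?_⟩
    · rw [if_neg]
      rintro rfl
      exact hp (ψ.mem_range_of_prefix_of_length_eq hws ht)
    · simp [insertLetter_apply_self, hij]
  · push Not at hlevel
    obtain ⟨ε, hε⟩ := exists_forall_eq_of_append_singleton_prefix hlevel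
    refine ⟨_, fixing_antitone (Nat.le_succ _) (insertLetter_mem_fixing _ _),
      _, insertLetter_mem_fixing _ ε, insertLetter_succ_mul_eq hlevel hε, ?_⟩
    rw [insertLetter_mem_fixing _ _ p (Nat.lt_succ_self _), insertLetter_apply_self]
    simp

end InsertLetter

end StrongEmbedding

theorem exists_measurable_selector {X β : Type*} [MeasurableSpace X] [Countable β]
    [Nonempty β] (G : X → Set β) (hG : ∀ b, MeasurableSet {x | b ∈ G x}) :
    ∃ g : X → β, (∀ b, MeasurableSet {x | g x = b}) ∧ ∀ x, (G x).Nonempty → g x ∈ G x := by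
  classical
  obtain ⟨e, he⟩ := exists_surjective_nat β
  have hex : ∀ x, ∃ n, (G x).Nonempty → e n ∈ G x := fun x => by
    by_cases hx : (G x).Nonempty
    · obtain ⟨b, hb⟩ := hx
      obtain ⟨n, rfl⟩ := he b
      exact ⟨n, fun _ => hb⟩
    · exact ⟨0, fun h => absurd h hx⟩
  have hnonempty : MeasurableSet {x | (G x).Nonempty} := by
    simp only [Set.Nonempty, Set.ofPred_exists]
    exact MeasurableSet.iUnion hG
  have hfind : Measurable fun x => Nat.find (hex x) :=
    measurable_find hex fun n => hnonempty.imp (hG (e n))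
  exact ⟨fun x => e (Nat.find (hex x)),
    fun b => hfind (MeasurableSet.of_discrete (s := {n | e n = b})), fun x => Nat.find_spec (hex x)⟩

namespace StrongEmbedding

variable {α : Type*} [Finite α] [Nontrivial α]

theorem exists_mem_cube_forall_mem_range_of_eq_apply {g : StrongEmbedding α → List α}
    (hg : ∀ x, MeasurableSet {ψ | g ψ = x}) (n : ℕ) (φ : StrongEmbedding α) :
    ∃ B ∈ cube n φ, ∀ ψ p, n ≤ p.length → g (B * ψ) = B p → p ∈ Set.range ψ := by
  have hmeasurable : ∀ ψ p, MeasurableSet {C : StrongEmbedding α | g (C * ψ) = C p} := fun ψ p => by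
    have hiUnion : {C : StrongEmbedding α | g (C * ψ) = C p} =
        ⋃ x, {C | g (C * ψ) = x} ∩ {C | C p = x} := by
      ext C
      simp [eq_comm]
    rw [hiUnion]
    exact MeasurableSet.iUnion fun x =>
      (measurable_mul_right ψ (hg x)).inter (measurableSet_setOf_apply_eq p x)
  obtain ⟨B, hB, hBQ⟩ := exists_mem_cube_forall
    (J := fun N => {x : (ℕ × StrongEmbedding α) × List α |
      IsCanonical x.1.1 (N + 1) x.1.2 ∧ x.2.length = N ∧ x.2 ∉ Set.range x.1.2})
    (Q := fun x => {C | g (C * x.1.2) ≠ C x.2})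
    (fun N => ((finite_setOf_isCanonical_prod (N + 1)).prod (List.finite_length_eq α N)).subset
      fun x hx => ⟨hx.1, hx.2.1⟩) n
    (by
      rintro _ - ⟨⟨k, ψ'⟩, p⟩ ⟨-, rfl, hp⟩ φ
      obtain ⟨D, hD, h | h⟩ := exists_mem_cube_subset_or_subset_compl (hmeasurable ψ' p) p.length φ
      · obtain ⟨θ₁, hθ₁, θ₂, hθ₂, hmul, hne⟩ := exists_mem_fixing_mul_eq_apply_ne hp
        have h₁ : g (D * θ₁ * ψ') = D (θ₁ p) := h (mul_mem_cube D hθ₁)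
        have h₂ : g (D * θ₂ * ψ') = D (θ₂ p) := h (mul_mem_cube D hθ₂)
        rw [mul_assoc, hmul, ← mul_assoc, h₂] at h₁
        exact absurd (D.injective h₁.symm) hne
      · exact ⟨D, hD, h⟩) φ
  refine ⟨B, hB, fun ψ p hp heq => ?_⟩
  by_contra hnotMem
  obtain ⟨k, ψ', hψ', hψ⟩ := exists_isCanonical_mem_cube ψ (p.length + 1)
  obtain ⟨θ, hθ, rfl⟩ := hψ'.mem_cube_iff.1 hψ
  have hθp : θ p = p := hθ p (Nat.lt_succ_self _)
  refine hBQ p.length hp ((k, ψ'), p) ⟨hψ', rfl, ?_⟩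
    (mul_mem_cube B (fixing_antitone (Nat.le_succ _) hθ)) ?_
  · rintro ⟨t, ht⟩
    exact hnotMem ⟨t, by rw [mul_apply, ht, hθp]⟩
  · rw [mul_assoc, mul_apply, hθp, heq]

end StrongEmbedding

open StrongEmbedding in
theorem milliken_borel_map_lemma_general {α : Type*} [Finite α] [Nontrivial α]
    (F : StrongEmbedding α → StrongEmbedding α) (hF : ∀ x, MeasurableSet {ψ | x ∈ Set.range (F ψ)})
    (n : ℕ) (φ : StrongEmbedding α) : ∃ B ∈ cube n φ, ∀ ψ, Set.range (F (B * ψ)) ⊆ Set.range B →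
      Set.range (F (B * ψ)) ⊆ Set.range (B * ψ) := by
  obtain ⟨g, hg, hgmem⟩ := exists_measurable_selector
    (fun ψ => {x | x ∈ Set.range (F ψ) ∧ x ∉ Set.range ψ ∧ φ.level n ≤ x.length})
    (fun x => (hF x).inter ((measurableSet_setOf_mem_range x).compl.inter (MeasurableSet.const _)))
  obtain ⟨B, hB, hBmem⟩ := exists_mem_cube_forall_mem_range_of_eq_apply hg n φ
  refine ⟨B, hB, fun ψ hsubset => ?_⟩
  by_contra hnot
  obtain ⟨t, ht, hnotMem⟩ := exists_le_length_apply_notMem_range hnot (φ.level n)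
  obtain ⟨hxF, hxnotMem, hxlength⟩ := hgmem (B * ψ)
    ⟨F (B * ψ) t, ⟨t, rfl⟩, hnotMem, ht.trans (length_le_length_apply _ t)⟩
  obtain ⟨p, hp⟩ := hsubset hxF
  have hnp : n ≤ p.length := by
    by_contra! hlt
    rw [← hp, cube_subset_cylinder n φ hB p hlt, length_apply] at hxlength
    exact hxlength.not_gt (φ.strictMono_level hlt)
  obtain ⟨s, rfl⟩ := hBmem ψ p hnp hp.symm
  exact hxnotMem ⟨s, hp⟩

/-! ### Strong subtrees -/

namespace StrongEmbedding

theorem isStrongSubtree_range (φ : StrongEmbedding Bool) : IsStrongSubtree (Set.range φ) := by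
  have hlevel {t : List Bool} {ℓ : ℕ} : (φ t).length = φ.level ℓ ↔ t.length = ℓ := by
    rw [φ.length_apply, φ.strictMono_level.injective.eq_iff]
  refine ⟨φ.level, φ.strictMono_level, ?_, ?_, ?_, ?_⟩
  · rintro _ ⟨t, rfl⟩
    exact ⟨t.length, φ.length_apply t⟩
  · refine ⟨φ [], ⟨⟨[], rfl⟩, hlevel.2 rfl⟩, ?_⟩
    rintro _ ⟨⟨t, rfl⟩, ht⟩
    rw [List.length_eq_zero_iff.1 (hlevel.1 ht)]
  · rintro ℓ _ ⟨t, rfl⟩ ht i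
    have htℓ := hlevel.1 ht
    refine ⟨φ (t ++ [i]), ⟨⟨_, rfl⟩, hlevel.2 (by simp [htℓ]), φ.append_singleton_prefix t i⟩, ?_⟩
    rintro _ ⟨⟨u, rfl⟩, hu, htu⟩
    rw [(φ.append_singleton_prefix_of_apply htu).eq_of_length (by simp [htℓ, hlevel.1 hu])]
  · rintro ℓ _ ⟨u, rfl⟩ hu
    obtain ⟨t, i, r, rfl, htℓ⟩ :=
      exists_eq_append_cons_of_lt_length ((Nat.lt_succ_self ℓ).trans_eq (hlevel.1 hu).symm)
    exact ⟨φ t, ⟨t, rfl⟩, hlevel.2 htℓ, i, φ.prefix_append_cons t r i⟩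

theorem range_eq_of_level {A : Set (List Bool)} {φ : StrongEmbedding Bool}
    (hφA : Set.range φ ⊆ A) (hlevel : ∀ a ∈ A, ∃ ℓ, a.length = φ.level ℓ)
    (hroot : ∀ a ∈ A, a.length = φ.level 0 → a = φ [])
    (hsucc : ∀ t i, ∀ b ∈ A, b.length = φ.level (t.length + 1) → φ t ++ [i] <+: b →
      b = φ (t ++ [i]))
    (hpred : ∀ ℓ, ∀ b ∈ A, b.length = φ.level (ℓ + 1) →
      ∃ a ∈ A, a.length = φ.level ℓ ∧ ∃ i, a ++ [i] <+: b) : Set.range φ = A := by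
  have hmem : ∀ ℓ, ∀ a ∈ A, a.length = φ.level ℓ → a ∈ Set.range φ := by
    intro ℓ
    induction ℓ with
    | zero => exact fun a ha haℓ => ⟨[], (hroot a ha haℓ).symm⟩
    | succ ℓ ih =>
      intro b hb hbℓ
      obtain ⟨a, ha, haℓ, i, hab⟩ := hpred ℓ b hb hbℓ
      obtain ⟨t, rfl⟩ := ih a ha haℓ
      rw [φ.length_apply, φ.strictMono_level.injective.eq_iff] at haℓ
      exact ⟨t ++ [i], (hsucc t i b hb (haℓ ▸ hbℓ) hab).symm⟩
  refine hφA.antisymm fun a ha => ?_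
  obtain ⟨ℓ, hℓ⟩ := hlevel a ha
  exact hmem ℓ a ha hℓ

theorem exists_range_eq {A : Set (List Bool)} (hA : IsStrongSubtree A) :
    ∃ φ : StrongEmbedding Bool, Set.range φ = A := by
  obtain ⟨k, hk, hlevel, ⟨root, ⟨hrootA, hrootk⟩, hroot⟩, hsucc, hpred⟩ := hA
  have hnext : ∀ (a : A) (i : Bool), ∃ b : A, ∀ ℓ, a.1.length = k ℓ →
      b.1.length = k (ℓ + 1) ∧ a.1 ++ [i] <+: b.1 := by
    rintro ⟨a, ha⟩ i
    obtain ⟨ℓ, hℓ⟩ := hlevel a ha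
    obtain ⟨b, ⟨hb, hbℓ, hab⟩, -⟩ := hsucc ℓ a ha hℓ i
    refine ⟨⟨b, hb⟩, fun ℓ' hℓ' => ?_⟩
    obtain rfl : ℓ' = ℓ := hk.injective (hℓ'.symm.trans hℓ)
    exact ⟨hbℓ, hab⟩
  choose next hnext using hnext
  let g : List Bool → A := fun t => t.foldl next ⟨root, hrootA⟩
  have hg_append : ∀ t i, g (t ++ [i]) = next (g t) i := fun t i => by simp [g]
  have hg_length : ∀ t, (g t).1.length = k t.length := fun t => by
    induction t using List.reverseRecOn with
    | nil => exact hrootk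
    | append_singleton t i ih => simpa [hg_append] using (hnext _ i _ ih).1
  let φ : StrongEmbedding Bool :=
    { toFun := fun t => (g t).1
      length_congr' := fun h => by rw [hg_length, hg_length, h]
      append_singleton_prefix' := fun t i => hg_append t i ▸ (hnext _ i _ (hg_length t)).2 }
  have hφk : φ.level = k := funext fun ℓ => (hg_length _).trans (by rw [List.length_replicate])
  refine ⟨φ, range_eq_of_level (Set.range_subset_iff.2 fun t => (g t).2) (hφk ▸ hlevel)
    (fun a ha haℓ => hroot a ⟨ha, hφk ▸ haℓ⟩) (fun t i b hb hbℓ htb => ?_) (hφk ▸ hpred)⟩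
  exact (hsucc t.length _ (g t).2 (hg_length t) i).unique ⟨hb, hφk ▸ hbℓ, htb⟩
    ⟨(g _).2, by simpa using hg_length (t ++ [i]), φ.append_singleton_prefix t i⟩

theorem levelOf_range (φ : StrongEmbedding Bool) (ℓ : ℕ) :
    levelOf (Set.range φ) ℓ = φ.level ℓ := by
  have hlevel : ∀ ℓ, ∃ a ∈ Set.range φ, a.length = φ.level ℓ := fun ℓ => ⟨_, ⟨_, rfl⟩, rfl⟩
  have hnth := Nat.nth_comp_of_strictMono (p := fun h => ∃ a ∈ Set.range φ, a.length = h) (n := ℓ)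
    φ.strictMono_level
    (by
      rintro _ ⟨_, ⟨t, rfl⟩, rfl⟩
      exact ⟨t.length, (φ.length_apply t).symm⟩)
    (fun hfin => absurd (hfin.subset (Set.range_subset_iff.2 hlevel))
      (Set.infinite_range_of_injective φ.strictMono_level.injective))
  rw [levelOf, ← hnth]
  simp only [hlevel, Nat.nth_true]

theorem approxT_range (φ : StrongEmbedding Bool) (n : ℕ) :
    approxT (Set.range φ) n = φ '' {t | t.length < n} := by
  ext a
  simp only [approxT, levelOf_range]
  constructor
  · rintro ⟨⟨t, rfl⟩, ℓ, hℓ, htℓ⟩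
    rw [φ.length_apply, φ.strictMono_level.injective.eq_iff] at htℓ
    exact ⟨t, htℓ.trans_lt hℓ, rfl⟩
  · rintro ⟨t, ht, rfl⟩
    exact ⟨⟨t, rfl⟩, t.length, ht, φ.length_apply t⟩

theorem approxT_range_of_mem_cube {n : ℕ} {φ ψ : StrongEmbedding Bool} (h : ψ ∈ cube n φ) :
    approxT (Set.range ψ) n = approxT (Set.range φ) n := by
  rw [approxT_range, approxT_range]
  exact Set.image_congr (cube_subset_cylinder n φ h)

/-- The strong subtree enumerated by a strong embedding of the full binary tree. -/
def toSinf (φ : StrongEmbedding Bool) : Sinf := ⟨Set.range φ, φ.isStrongSubtree_range⟩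

theorem toSinf_surjective : Function.Surjective toSinf := fun A => by
  obtain ⟨φ, hφ⟩ := exists_range_eq A.2
  exact ⟨φ, Subtype.ext hφ⟩

theorem measurable_toSinf : Measurable toSinf :=
  Measurable.subtype_mk <| measurable_set_iff.2 fun x =>
    measurableSet_setOfPred.1 (measurableSet_setOf_mem_range x)

theorem ramseyConullT_of_forall_exists_mem_cube {D : Set Sinf}
    (h : ∀ n φ, ∃ B ∈ cube n φ, ∀ C : Sinf, C.1 ⊆ Set.range B → C ∈ D) : RamseyConullT D := by
  rintro s A ⟨C, ⟨n, hs⟩, hCA⟩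
  obtain ⟨φ, rfl⟩ := toSinf_surjective C
  obtain ⟨B, hB, hBD⟩ := h n φ
  refine ⟨toSinf B, ⟨⟨n, hs.trans (approxT_range_of_mem_cube hB).symm⟩,
    (range_subset_of_mem_cube hB).trans hCA⟩, ?_⟩
  exact Set.eq_empty_iff_forall_notMem.2 fun C ⟨⟨_, hCB⟩, hCD⟩ => hCD (hBD C hCB)

theorem exists_mem_cube_forall_subset_of_measurable {f : Sinf → Sinf} (hf : Measurable f) (n : ℕ)
    (φ : StrongEmbedding Bool) :
    ∃ B ∈ cube n φ, ∀ A : Sinf, A.1 ⊆ Set.range B → (f A).1 ⊆ Set.range B → (f A).1 ⊆ A.1 := by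
  choose F hF using fun ψ => toSinf_surjective (f (toSinf ψ))
  have hrange : ∀ ψ, Set.range (F ψ) = (f (toSinf ψ)).1 := fun ψ => congrArg Subtype.val (hF ψ)
  obtain ⟨B, hB, hBF⟩ := milliken_borel_map_lemma_general F (fun x => by
    simp only [hrange]
    exact measurableSet_setOfPred.2 <|
      (measurable_set_mem x).comp (measurable_subtype_coe.comp (hf.comp measurable_toSinf))) n φ
  refine ⟨B, hB, fun A hAB hfAB => ?_⟩
  obtain ⟨ψ', rfl⟩ := toSinf_surjective A
  obtain ⟨ψ, rfl⟩ := exists_eq_mul_of_range_subset hAB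
  have h := hBF ψ
  rw [hrange] at h
  exact h hfAB

end StrongEmbedding

/-- Lemma 7.2: for every Borel map `f : S_∞(2^{<ℕ}) → S_∞(2^{<ℕ})` there is a Ramsey conull
set `𝓓` such that for all `B ∈ 𝓓` and `A ≤ B`, if `f(A) ≤ B` then `f(A) ≤ A`. -/
theorem milliken_borel_map_lemma (f : Sinf → Sinf) (hf : Measurable f) :
    ∃ D : Set Sinf, RamseyConullT D ∧
      ∀ B ∈ D, ∀ A : Sinf, A.1 ⊆ B.1 → (f A).1 ⊆ B.1 → (f A).1 ⊆ A.1 := by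
  refine ⟨{B | ∀ A : Sinf, A.1 ⊆ B.1 → (f A).1 ⊆ B.1 → (f A).1 ⊆ A.1},
    StrongEmbedding.ramseyConullT_of_forall_exists_mem_cube fun n φ => ?_, fun _ hB => hB⟩
  obtain ⟨B, hB, h⟩ := StrongEmbedding.exists_mem_cube_forall_subset_of_measurable hf n φ
  exact ⟨B, hB, fun C hCB A hAC hfAC => h A (hAC.trans hCB) (hfAC.trans hCB)⟩
end

section
/- For every k ∈ ℕ there exists N ∈ ℕ such that the following holds: for every finite set X, every (k,N)-partition P = {X_0, …, X_{k−1}} of X (i.e., a partition into k pieces with |X_i| ≥ N for all i < k), and every map e : 𝒯(P) → 𝒫(X), there exists a complete section E ∈ 𝒞𝒯(P) such that for all F ⊆ E, either e(F) ⊆ F or e(F) ⊄ E. -/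
/-!
Choose the complete section `E = {s i}` at random. If `F = s(I)` is a bad subset, some
`s j ∉ F` is the only element of `e F` in the `j`-th part, so `s j` is forced by the values of `s`
on `I ∌ j`. As `I` ranges over the subsets avoiding `j`, at most `2 ^ (k - 1)` values are forced at
`j`, and `s` takes none of the forced values with positive probability once every part has more
than `k * 2 ^ (k - 1)` elements.
-/

open Finset Function

section AvoidForbidden

variable {ι : Type*} [Fintype ι] [DecidableEq ι] {α : ι → Type*}

lemma card_filter_apply_mem_mul_card_le_sum_card [∀ i, DecidableEq (α i)]
    (P : ∀ i, Finset (α i)) (i : ι)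
    (B : (∀ j, α j) → Finset (α i)) (hB : ∀ s y, B (update s i y) = B s) :
    #{s ∈ Fintype.piFinset P | s i ∈ B s} * #(P i) ≤ ∑ s ∈ Fintype.piFinset P, #(B s) := by
  rw [← card_product, ← card_sigma]
  -- Swapping the `i`-th coordinate with a free value is invertible, and leaves `B` unchanged.
  refine card_le_card_of_injOn (fun p ↦ ⟨update p.1 i p.2, p.1 i⟩) ?_ ?_
  · rintro ⟨s, y⟩ h
    obtain ⟨⟨hs, hsB⟩, hy⟩ : (s ∈ Fintype.piFinset P ∧ s i ∈ B s) ∧ y ∈ P i := by simpa using h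
    have hupdate : ∀ j, update s i y j ∈ P j :=
      (forall_update_iff s fun j z ↦ z ∈ P j).2 ⟨hy, fun j _ ↦ Fintype.mem_piFinset.1 hs j⟩
    simpa [hB] using ⟨hupdate, hsB⟩
  · refine Set.LeftInvOn.injOn (f₁' := fun q ↦ (update q.1 i q.2, q.1 i)) fun p _ ↦ ?_
    simp

lemma exists_mem_piFinset_forall_apply_notMem (P : ∀ i, Finset (α i))
    (B : ∀ i, (∀ j, α j) → Finset (α i)) (hB : ∀ i s y, B i (update s i y) = B i s) {m : ℕ}
    (hm : ∀ i s, #(B i s) ≤ m) (hP : ∀ i, Fintype.card ι * m < #(P i)) :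
    ∃ s ∈ Fintype.piFinset P, ∀ i, s i ∉ B i s := by
  classical
  set S := Fintype.piFinset P
  have hSpos : 0 < #S :=
    (Fintype.piFinset_nonempty.2 fun i ↦ card_pos.1 (Nat.zero_lt_of_lt (hP i))).card_pos
  have hbad (i : ι) : #{s ∈ S | s i ∈ B i s} * (Fintype.card ι * m + 1) ≤ #S * m :=
    calc #{s ∈ S | s i ∈ B i s} * (Fintype.card ι * m + 1)
      _ ≤ #{s ∈ S | s i ∈ B i s} * #(P i) := Nat.mul_le_mul_left _ (hP i)
      _ ≤ ∑ s ∈ S, #(B i s) := card_filter_apply_mem_mul_card_le_sum_card P i (B i) (hB i)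
      _ ≤ #S * m := sum_le_card_nsmul _ _ _ fun s _ ↦ hm i s
  by_contra! hcover
  have hsub : S ⊆ univ.biUnion fun i ↦ {s ∈ S | s i ∈ B i s} := fun s hs ↦ by
    simpa [hs] using hcover s hs
  have hle : #S * (Fintype.card ι * m + 1) ≤ #S * (Fintype.card ι * m) :=
    calc #S * (Fintype.card ι * m + 1)
      _ ≤ (∑ i, #{s ∈ S | s i ∈ B i s}) * (Fintype.card ι * m + 1) :=
        Nat.mul_le_mul_right _ ((card_le_card hsub).trans card_biUnion_le)
      _ = ∑ i, #{s ∈ S | s i ∈ B i s} * (Fintype.card ι * m + 1) := sum_mul ..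
      _ ≤ Fintype.card ι * (#S * m) := sum_le_card_nsmul _ _ _ fun i _ ↦ hbad i
      _ = #S * (Fintype.card ι * m) := by ring
  exact (Nat.lt_succ_self _).not_ge (Nat.le_of_mul_le_mul_left hle hSpos)

end AvoidForbidden

lemma range_inter_eq_singleton_of_pairwise_disjoint {ι α : Type*} {P : ι → Set α}
    (hP : Pairwise (Disjoint on P)) {s : ι → α} (hs : ∀ i, s i ∈ P i) (i : ι) :
    Set.range s ∩ P i = {s i} := by
  refine Set.Subset.antisymm ?_ (Set.singleton_subset_iff.2 ⟨⟨i, rfl⟩, hs i⟩)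
  rintro _ ⟨⟨j, rfl⟩, hj⟩
  rw [hP.eq (Set.not_disjoint_iff.2 ⟨s j, hs j, hj⟩), Set.mem_singleton_iff]

section ForcedValues

variable {ι α : Type*} [DecidableEq α]

open Classical in
/-- The values of `P j` which `e` forces at `j` on a choice function `s`: those `y` which are the
only element of `e (s(I))` in `P j`, for some `I ∌ j`. Excluding `j` from `I` makes this set
independent of `s j`. -/
noncomputable def forcedValues (P : ι → Finset α) (e : Finset α → Set α) (j : ι) (s : ι → α) :
    Finset α :=
  {y ∈ P j | ∃ I : Finset ι, j ∉ I ∧ e (I.image s) ∩ P j = {y}}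

variable {P : ι → Finset α} {e : Finset α → Set α} {j : ι} {s : ι → α}

lemma mem_forcedValues {y : α} :
    y ∈ forcedValues P e j s ↔
      y ∈ P j ∧ ∃ I : Finset ι, j ∉ I ∧ e (I.image s) ∩ P j = {y} := by
  simp only [forcedValues, mem_filter]

lemma forcedValues_update [DecidableEq ι] (y : α) :
    forcedValues P e j (update s j y) = forcedValues P e j s := by
  have himage {I : Finset ι} (hj : j ∉ I) : I.image (update s j y) = I.image s :=
    image_congr fun i hi ↦ update_of_ne (ne_of_mem_of_not_mem hi hj) y s
  ext z
  simp only [mem_forcedValues]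
  exact and_congr_right' (exists_congr fun I ↦ and_congr_right fun hj ↦ by rw [himage hj])

lemma card_forcedValues_le [Fintype ι] :
    #(forcedValues P e j s) ≤ 2 ^ (Fintype.card ι - 1) := by
  classical
  let traces : Finset (Set α) := (univ.erase j).powerset.image fun I ↦ e (I.image s) ∩ P j
  calc #(forcedValues P e j s)
    _ ≤ #traces := by
      refine card_le_card_of_injOn (fun y ↦ {y}) (fun y hy ↦ ?_) Set.singleton_injective.injOn
      obtain ⟨-, I, hj, hI⟩ := mem_forcedValues.1 hy
      exact mem_image.2 ⟨I, mem_powerset.2 (subset_erase.2 ⟨subset_univ I, hj⟩), hI⟩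
    _ ≤ #(univ.erase j).powerset := card_image_le
    _ = 2 ^ (Fintype.card ι - 1) := by
      rw [card_powerset, card_erase_of_mem (mem_univ j), card_univ]

lemma apply_mem_forcedValues (hP : Pairwise (Disjoint on P)) (hs : ∀ i, s i ∈ P i)
    {I : Finset ι} (hjI : j ∉ I) (hj : s j ∈ e (I.image s))
    (hrange : e (I.image s) ⊆ Set.range s) : s j ∈ forcedValues P e j s := by
  refine mem_forcedValues.2 ⟨hs j, I, hjI, Set.Subset.antisymm ?_ ?_⟩
  · rw [← range_inter_eq_singleton_of_pairwise_disjoint (P := fun i ↦ (P i : Set α))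
      (fun _ _ hij ↦ disjoint_coe.2 (hP hij)) hs j]
    exact Set.inter_subset_inter_left _ hrange
  · exact Set.singleton_subset_iff.2 ⟨hj, hs j⟩

end ForcedValues

lemma exists_choice_forall_subset_or_not_subset {ι α : Type*} [Fintype ι] {P : ι → Finset α}
    (hP : Pairwise (Disjoint on P))
    (hcard : ∀ i, Fintype.card ι * 2 ^ (Fintype.card ι - 1) < #(P i)) (e : Finset α → Set α) :
    ∃ s : ι → α, (∀ i, s i ∈ P i) ∧
      ∀ F : Finset α, (F : Set α) ⊆ Set.range s → e F ⊆ F ∨ ¬ e F ⊆ Set.range s := by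
  classical
  obtain ⟨s, hs, hfree⟩ := exists_mem_piFinset_forall_apply_notMem P (forcedValues P e)
    (fun _ _ ↦ forcedValues_update) (fun _ _ ↦ card_forcedValues_le) hcard
  rw [Fintype.mem_piFinset] at hs
  refine ⟨s, hs, fun F hF ↦ or_iff_not_imp_right.2 fun hrange x hx ↦ ?_⟩
  rw [not_not] at hrange
  obtain ⟨j, rfl⟩ := hrange hx
  obtain ⟨I, -, rfl⟩ := subset_set_image_iff.1 (Set.image_univ.symm ▸ hF)
  by_contra hjF
  have hjI : j ∉ I := fun hj ↦ hjF (mem_coe.2 (mem_image_of_mem s hj))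
  exact hfree j (apply_mem_forcedValues hP hs hjI hx hrange)

theorem section_lemma_general {ι α : Type*} [Fintype ι] {P : ι → Set α}
    (hP : Pairwise (Disjoint on P))
    (hcard : ∀ i, ((Fintype.card ι * 2 ^ (Fintype.card ι - 1) : ℕ) : ℕ∞) < (P i).encard)
    (e : Finset α → Set α) :
    ∃ E : Finset α, (E : Set α) ⊆ ⋃ i, P i ∧ (∀ i, ((E : Set α) ∩ P i).encard = 1) ∧
      ∀ F ⊆ E, e F ⊆ F ∨ ¬ e F ⊆ E := by
  classical
  have hfinset (i : ι) : ∃ Q : Finset α, (Q : Set α) ⊆ P i ∧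
      Fintype.card ι * 2 ^ (Fintype.card ι - 1) < #Q := by
    obtain ⟨t, htP, ht⟩ := Set.exists_subset_encard_eq (Order.add_one_le_of_lt (hcard i))
    lift t to Finset α using Set.finite_of_encard_eq_coe (k := _ + 1) ht
    rw [Set.encard_coe_eq_coe_finsetCard] at ht
    exact ⟨t, htP, Nat.lt_of_succ_le (Nat.cast_inj.1 ht).ge⟩
  choose Q hQP hQcard using hfinset
  have hQ : Pairwise (Disjoint on Q) := fun i j hij ↦
    disjoint_coe.1 ((hP hij).mono (hQP i) (hQP j))
  obtain ⟨s, hsQ, hs⟩ := exists_choice_forall_subset_or_not_subset hQ hQcard e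
  have hsP (i : ι) : s i ∈ P i := hQP i (hsQ i)
  have hcoe : ((univ.image s : Finset α) : Set α) = Set.range s := by
    rw [coe_image, coe_univ, Set.image_univ]
  refine ⟨univ.image s, ?_, fun i ↦ ?_, fun F hF ↦ ?_⟩
  · exact hcoe ▸ Set.range_subset_iff.2 fun i ↦ Set.mem_iUnion_of_mem i (hsP i)
  · rw [hcoe, range_inter_eq_singleton_of_pairwise_disjoint hP hsP, Set.encard_singleton]
  · rw [hcoe]
    exact hs F (hcoe ▸ coe_subset.2 hF)

/-- Lemma 7.4: for every `k` there is `N` such that for every finite set `X` (modelled as a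
finite type `α`), every `(k,N)`-partition `P = {X_0,…,X_{k−1}}` of `X` (pairwise disjoint,
covering, with `|X_i| ≥ N`), and every map `e` on sections of `P` with values in `𝒫(X)`,
there is a complete section `E` of `P` such that for all `F ⊆ E`, either `e(F) ⊆ F` or
`e(F) ⊄ E`. -/
theorem section_lemma (k : ℕ) :
    ∃ N : ℕ, ∀ (α : Type) [Fintype α] [DecidableEq α] (P : Fin k → Finset α),
      (∀ i j : Fin k, i ≠ j → Disjoint (P i) (P j)) →
      (∀ x : α, ∃ i : Fin k, x ∈ P i) →
      (∀ i : Fin k, N ≤ (P i).card) →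
      ∀ e : Finset α → Finset α,
        ∃ E : Finset α, (∀ i : Fin k, (E ∩ P i).card = 1) ∧
          ∀ F ⊆ E, e F ⊆ F ∨ ¬ e F ⊆ E := by
  refine ⟨k * 2 ^ (k - 1) + 1, fun α _ _ P hP _ hcard e ↦ ?_⟩
  obtain ⟨E, -, hE, he⟩ := section_lemma_general (P := fun i ↦ (P i : Set α))
    (fun i j hij ↦ disjoint_coe.2 (hP i j hij))
    (fun i ↦ by rw [Fintype.card_fin, Set.encard_coe_eq_coe_finsetCard]; exact_mod_cast hcard i)
    (fun F ↦ e F)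
  exact ⟨E, fun i ↦ by simpa [← coe_inter] using hE i, by simpa using he⟩
end

section
/- Let k, N ∈ ℕ with k, N ≥ 1, let X be a finite set, and let P = {X_0, …, X_{k−1}} be a partition of X into k pieces with |X_i| = N for all i < k. For a map e : 𝒯(P) → 𝒫(X), let 𝓑_e be the set of all pairs (F, E) ∈ 𝒯(P) × 𝒞𝒯(P) such that F ⊆ E, e(F) ⊄ F, and e(F) ⊆ E. Then |𝓑_e| ≤ 2^k · (N^k − (N−1)^k). -/
/-!
Fix a complete section `b`. A pair `(F, E)` in `𝓑_e` is encoded by the set `D` of blocks met by `F`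
together with the function `s` choosing the point of `E` in each block. Since `F` is determined by
`s` restricted to `D`, so is a chosen point of `e(F) \ F` and the block `i` containing it; this
point lies in `E` but not in `F`, so it equals `s i` and `i ∉ D`. Replacing `s i` by `b i`
therefore loses no information once `D` is known, and the resulting complete section meets `b`.
So each of the `2 ^ k` choices of `D` contributes at most the number `N ^ k - (N - 1) ^ k` of
complete sections meeting `b`.
-/

open Finset

section ForcedCoordinate

variable {ι : Type*} [DecidableEq ι] {β : ι → Type*}

lemma eq_of_update_eq_update_of_forced {D : Set ι} {s t : ∀ i, β i} {i j : ι} {x : β i} {y : β j}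
    (hi : i ∉ D) (hj : j ∉ D)
    (hsi : (∀ l ∈ D, t l = s l) → t i = s i) (htj : (∀ l ∈ D, s l = t l) → s j = t j)
    (h : Function.update s i x = Function.update t j y) : s = t := by
  have eq_off (l : ι) (hli : l ≠ i) (hlj : l ≠ j) : s l = t l := by
    simpa [hli, hlj] using congrFun h l
  have eq_on (l : ι) (hl : l ∈ D) : s l = t l :=
    eq_off l (ne_of_mem_of_not_mem hl hi) (ne_of_mem_of_not_mem hl hj)
  funext l
  by_cases hli : l = i
  · exact hli ▸ (hsi fun l hl ↦ (eq_on l hl).symm).symm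
  by_cases hlj : l = j
  · exact hlj ▸ htj eq_on
  exact eq_off l hli hlj

variable [Fintype ι] {P : ∀ i, Finset (β i)}

lemma card_piFinset_filter_exists_eq [∀ i, DecidableEq (β i)] {b : ∀ i, β i}
    (hb : b ∈ Fintype.piFinset P) :
    #{s ∈ Fintype.piFinset P | ∃ i, s i = b i} = ∏ i, #(P i) - ∏ i, (#(P i) - 1) := by
  have avoiding : {s ∈ Fintype.piFinset P | ¬ ∃ i, s i = b i} =
      Fintype.piFinset fun i ↦ (P i).erase (b i) := by
    ext s
    simp [forall_and, and_comm]
  have card_avoiding : #{s ∈ Fintype.piFinset P | ¬ ∃ i, s i = b i} = ∏ i, (#(P i) - 1) := by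
    rw [avoiding, Fintype.card_piFinset]
    exact prod_congr rfl fun i _ ↦ card_erase_of_mem (Fintype.mem_piFinset.1 hb i)
  rw [← card_avoiding, ← Fintype.card_piFinset P]
  exact Nat.eq_sub_of_add_eq (card_filter_add_card_filter_not _)

lemma card_le_prod_sub_prod_of_forced_coordinate {D : Set ι} {S : Finset (∀ i, β i)}
    (hSP : S ⊆ Fintype.piFinset P)
    (hS : ∀ s ∈ S, ∃ i ∉ D, ∀ t ∈ S, (∀ j ∈ D, t j = s j) → t i = s i) :
    #S ≤ ∏ i, #(P i) - ∏ i, (#(P i) - 1) := by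
  classical
  obtain rfl | ⟨b, hbS⟩ := S.eq_empty_or_nonempty
  · simp
  have hb := hSP hbS
  have : Nonempty ι := (hS b hbS).nonempty
  choose! c hcD hforced using hS
  rw [← card_piFinset_filter_exists_eq hb]
  refine card_le_card_of_injOn (fun s ↦ Function.update s (c s) (b (c s))) ?_ ?_
  · intro s hs
    refine mem_filter.2 ⟨Fintype.mem_piFinset.2 fun i ↦ ?_, c s, Function.update_self ..⟩
    obtain rfl | hi := eq_or_ne i (c s)
    · simpa using Fintype.mem_piFinset.1 hb (c s)
    · simpa [hi] using Fintype.mem_piFinset.1 (hSP hs) i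
  · intro s hs t ht h
    exact eq_of_update_eq_update_of_forced (hcD s hs) (hcD t ht) (hforced s hs t ht)
      (hforced t ht s hs) h

end ForcedCoordinate

section BadPairs

variable {ι α : Type*} [Fintype ι] [DecidableEq α] {P : ι → Finset α}

lemma exists_mem_pi_image_eq (hcover : ∀ x, ∃ i, x ∈ P i) {E : Finset α}
    (hE : ∀ i, #(E ∩ P i) = 1) : ∃ s : ι → α, (∀ i, s i ∈ P i) ∧ univ.image s = E := by
  choose s hs using fun i ↦ card_eq_one.1 (hE i)
  have hmem (i : ι) : s i ∈ E ∩ P i := by simp [hs i]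
  refine ⟨s, fun i ↦ (mem_inter.1 (hmem i)).2, Subset.antisymm ?_ fun x hx ↦ ?_⟩
  · exact image_subset_iff.2 fun i _ ↦ (mem_inter.1 (hmem i)).1
  · obtain ⟨i, hi⟩ := hcover x
    have hxs : x = s i := by simpa [hs i] using mem_inter.2 ⟨hx, hi⟩
    exact hxs ▸ mem_image_of_mem s (mem_univ i)

section Choices

variable [DecidableEq ι]

/-- The pairs `(F, E)` of `𝓑_e` for which `F` meets exactly the blocks indexed by `D`, encoded by
the choice function `s` of the complete section `E`: then `E` is the range of `s` and
`F = D.image s`. -/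
def badChoices (P : ι → Finset α) (e : Finset α → Finset α) (D : Finset ι) : Finset (ι → α) :=
  {s ∈ Fintype.piFinset P | ¬ e (D.image s) ⊆ D.image s ∧ e (D.image s) ⊆ univ.image s}

lemma exists_forced_coordinate_of_mem_badChoices
    (hdisj : Pairwise fun i j ↦ Disjoint (P i) (P j)) {e : Finset α → Finset α} {D : Finset ι}
    {s : ι → α} (hs : s ∈ badChoices P e D) :
    ∃ i ∉ D, ∀ t ∈ badChoices P e D, (∀ j ∈ D, t j = s j) → t i = s i := by
  simp only [badChoices, mem_filter, Fintype.mem_piFinset] at hs ⊢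
  obtain ⟨hsP, hnot, hsub⟩ := hs
  obtain ⟨x, hxe, hxF⟩ := not_subset.1 hnot
  obtain ⟨i, -, rfl⟩ := mem_image.1 (hsub hxe)
  refine ⟨i, fun hi ↦ hxF (mem_image_of_mem s hi), fun t ⟨htP, _, htsub⟩ hts ↦ ?_⟩
  have image_eq : D.image t = D.image s := image_congr hts
  obtain ⟨j, -, hj⟩ := mem_image.1 (htsub (image_eq ▸ hxe))
  have hji : j = i := hdisj.eq (not_disjoint_iff.2 ⟨t j, htP j, hj ▸ hsP i⟩)
  exact hji ▸ hj

lemma card_badChoices_le (hdisj : Pairwise fun i j ↦ Disjoint (P i) (P j))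
    (e : Finset α → Finset α) (D : Finset ι) :
    #(badChoices P e D) ≤ ∏ i, #(P i) - ∏ i, (#(P i) - 1) :=
  card_le_prod_sub_prod_of_forced_coordinate (D := D) (filter_subset _ _) fun _ ↦
    exists_forced_coordinate_of_mem_badChoices hdisj

lemma exists_badChoices_image_eq (hcover : ∀ x, ∃ i, x ∈ P i) {e : Finset α → Finset α}
    {F E : Finset α} (hE : ∀ i, #(E ∩ P i) = 1) (hFE : F ⊆ E) (hnot : ¬ e F ⊆ F)
    (hsub : e F ⊆ E) :
    ∃ D, ∃ s ∈ badChoices P e D, D.image s = F ∧ univ.image s = E := by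
  obtain ⟨s, hsP, rfl⟩ := exists_mem_pi_image_eq hcover hE
  obtain ⟨D, -, rfl⟩ := subset_image_iff.1 hFE
  exact ⟨D, s, mem_filter.2 ⟨Fintype.mem_piFinset.2 hsP, hnot, hsub⟩, rfl, rfl⟩

end Choices

theorem bad_pairs_bound_general (hdisj : Pairwise fun i j ↦ Disjoint (P i) (P j))
    (hcover : ∀ x, ∃ i, x ∈ P i) (e : Finset α → Finset α) :
    {p : Finset α × Finset α |
        (∀ i, #(p.1 ∩ P i) ≤ 1) ∧ (∀ i, #(p.2 ∩ P i) = 1) ∧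
        p.1 ⊆ p.2 ∧ ¬ e p.1 ⊆ p.1 ∧ e p.1 ⊆ p.2}.ncard
      ≤ 2 ^ Fintype.card ι * (∏ i, #(P i) - ∏ i, (#(P i) - 1)) := by
  classical
  let pairs : Finset (Finset α × Finset α) :=
    univ.biUnion fun D : Finset ι ↦ (badChoices P e D).image fun s ↦ (D.image s, univ.image s)
  have card_pairs : #pairs ≤ 2 ^ Fintype.card ι * (∏ i, #(P i) - ∏ i, (#(P i) - 1)) := by
    rw [← Fintype.card_finset, ← card_univ]
    exact card_biUnion_le_card_mul _ _ _ fun D _ ↦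
      card_image_le.trans (card_badChoices_le hdisj e D)
  refine le_trans ?_ card_pairs
  rw [← Set.ncard_coe_finset pairs]
  refine Set.ncard_le_ncard ?_ pairs.finite_toSet
  rintro ⟨F, E⟩ ⟨-, hE, hFE, hnot, hsub⟩
  obtain ⟨D, s, hs, rfl, rfl⟩ := exists_badChoices_image_eq hcover hE hFE hnot hsub
  exact mem_biUnion.2 ⟨D, mem_univ D, mem_image_of_mem _ hs⟩

end BadPairs

/-- The counting bound from the proof of Lemma 7.4: if `P = {X_0,…,X_{k−1}}` is a partition
of a finite set `X` into `k` pieces each of size `N`, and `e` is a map from sections of `P`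
to `𝒫(X)`, then the set `𝓑_e` of pairs `(F, E)` with `F` a section, `E` a complete section,
`F ⊆ E`, `e(F) ⊄ F` and `e(F) ⊆ E` has size at most `2^k · (N^k − (N−1)^k)`. -/
theorem bad_pairs_bound (k N : ℕ) (hk : 1 ≤ k) (hN : 1 ≤ N)
    (α : Type) [Fintype α] [DecidableEq α] (P : Fin k → Finset α)
    (hdisj : ∀ i j : Fin k, i ≠ j → Disjoint (P i) (P j))
    (hcover : ∀ x : α, ∃ i : Fin k, x ∈ P i)
    (hcard : ∀ i : Fin k, (P i).card = N)
    (e : Finset α → Finset α) :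
    {p : Finset α × Finset α |
        (∀ i : Fin k, (p.1 ∩ P i).card ≤ 1) ∧ (∀ i : Fin k, (p.2 ∩ P i).card = 1) ∧
        p.1 ⊆ p.2 ∧ ¬ e p.1 ⊆ p.1 ∧ e p.1 ⊆ p.2}.ncard
      ≤ 2 ^ k * (N ^ k - (N - 1) ^ k) := by
  simpa only [hcard, prod_const, card_univ, Fintype.card_fin] using
    bad_pairs_bound_general (fun i j ↦ hdisj i j) hcover e
end

section
/- Let k, N ∈ ℕ. Suppose that for every finite set Z and every partition Q = {Z_0, …, Z_{k−1}} of Z into k pieces with |Z_i| = N for all i < k, and every map e : 𝒯(Q) → 𝒫(Z), there exists E ∈ 𝒞𝒯(Q) such that for all F ⊆ E, either e(F) ⊆ F or e(F) ⊄ E. Then for every finite set X, every (k,N)-partition P = {X_0, …, X_{k−1}} of X (a partition into k pieces with |X_i| ≥ N for all i < k), and every map e : 𝒯(P) → 𝒫(X), there exists E ∈ 𝒞𝒯(P) such that for all F ⊆ E, either e(F) ⊆ F or e(F) ⊄ E. -/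
/-!
Choose `n i` points from each piece `P i`. Their union `U` is finite and is partitioned by its
traces on the pieces, which have the prescribed sizes. Map `F ⊆ U` to `e F ∩ U`: passing from `e`
to this map loses nothing, because only the case `e F ⊆ E ⊆ U` matters, and there `e F ∩ U = e F`.
So a complete section that works in `U` works for `e` as well.
-/

open Finset Function

variable {ι α β : Type*}

/-- The complete sections of a family `P`, the elements of `𝒞𝒯(P)` when `P` is a partition. The
family need not cover `α`, and `E` is not restricted outside the pieces. -/
def IsCompleteSection [DecidableEq α] (P : ι → Finset α) (E : Finset α) : Prop :=
  ∀ i, #(E ∩ P i) = 1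

/-- Free sets of a set mapping `e`: those `E` for which `e F` escapes from `E` whenever `F ⊆ E`,
except possibly when `e F` stays inside `F`. The map `e` is total, so that it does not depend on a
partition; only its values on subsets of `E` matter. -/
def IsFreeFor (e : Finset α → Finset α) (E : Finset α) : Prop :=
  ∀ F ⊆ E, e F ⊆ F ∨ ¬ e F ⊆ E

/-- The conclusion of the section lemma for the family `P`: every set mapping has a free complete
section. -/
def HasFreeSections [DecidableEq α] (P : ι → Finset α) : Prop :=
  ∀ e : Finset α → Finset α, ∃ E, IsCompleteSection P E ∧ IsFreeFor e E

theorem map_inter_preimage [DecidableEq α] [DecidableEq β] (f : β ↪ α) (s : Finset β)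
    (t : Finset α) : (s ∩ t.preimage f f.injective.injOn).map f = s.map f ∩ t := by
  simp only [← coe_inj, coe_map, coe_inter, coe_preimage, Set.image_inter_preimage]

theorem IsCompleteSection.map [DecidableEq α] [DecidableEq β] {f : β ↪ α} {P : ι → Finset α}
    {E : Finset β} (hE : IsCompleteSection (fun i ↦ (P i).preimage f f.injective.injOn) E) :
    IsCompleteSection P (E.map f) := fun i ↦ by
  rw [← map_inter_preimage, card_map, hE i]

theorem IsFreeFor.map {f : β ↪ α} {e : Finset α → Finset α} {E : Finset β}
    (hE : IsFreeFor (fun F ↦ (e (F.map f)).preimage f f.injective.injOn) E) :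
    IsFreeFor e (E.map f) := by
  intro F hFE
  by_cases heE : e F ⊆ E.map f
  · obtain ⟨F, hF, rfl⟩ := subset_map_iff.1 hFE
    obtain ⟨G, hG, heG⟩ := subset_map_iff.1 heE
    have hGF : G ⊆ F ∨ ¬ G ⊆ E := by simpa only [heG, preimage_map] using hE F hF
    left
    rw [heG, map_subset_map]
    exact hGF.resolve_right (not_not_intro hG)
  · exact Or.inr heE

theorem HasFreeSections.of_preimage [DecidableEq α] [DecidableEq β] (f : β ↪ α)
    {P : ι → Finset α} (hP : HasFreeSections fun i ↦ (P i).preimage f f.injective.injOn) :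
    HasFreeSections P := fun e ↦
  let ⟨E, hsection, hfree⟩ := hP fun F ↦ (e (F.map f)).preimage f f.injective.injOn
  ⟨E.map f, hsection.map, hfree.map⟩

theorem biUnion_inter_eq_of_pairwiseDisjoint [DecidableEq α] {s : Finset ι}
    {P Z : ι → Finset α} (hP : (s : Set ι).PairwiseDisjoint P) (hZ : ∀ i ∈ s, Z i ⊆ P i)
    {i : ι} (hi : i ∈ s) : s.biUnion Z ∩ P i = Z i := by
  refine Subset.antisymm (fun x hx ↦ ?_)
    (subset_inter (subset_biUnion_of_mem Z hi) (hZ i hi))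
  obtain ⟨hxU, hxi⟩ := mem_inter.1 hx
  obtain ⟨j, hj, hxj⟩ := mem_biUnion.1 hxU
  obtain rfl : j = i := hP.elim_finset hj hi x (hZ j hj hxj) hxi
  exact hxj

theorem exists_subset_biUnion_card_inter_eq [DecidableEq α] {s : Finset ι} {P : ι → Finset α}
    {n : ι → ℕ} (hP : (s : Set ι).PairwiseDisjoint P) (hn : ∀ i ∈ s, n i ≤ #(P i)) :
    ∃ U ⊆ s.biUnion P, ∀ i ∈ s, #(U ∩ P i) = n i := by
  choose! Z hZP hZn using fun i hi ↦ exists_subset_card_eq (hn i hi)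
  refine ⟨s.biUnion Z, biUnion_mono hZP, fun i hi ↦ ?_⟩
  rw [biUnion_inter_eq_of_pairwiseDisjoint hP hZP hi, hZn i hi]

theorem exists_embedding_fin_map_univ_eq (U : Finset α) :
    ∃ (m : ℕ) (f : Fin m ↪ α), univ.map f = U :=
  ⟨#U, U.equivFin.symm.toEmbedding.trans (Embedding.subtype _), by
    rw [← map_map, map_univ_equiv, univ_eq_attach, attach_map_val]⟩

theorem section_lemma_reduction_general [Finite ι] [DecidableEq α] (n : ι → ℕ)
    (hyp : ∀ (m : ℕ) (Q : ι → Finset (Fin m)), Pairwise (Disjoint on Q) →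
      (∀ z, ∃ i, z ∈ Q i) → (∀ i, #(Q i) = n i) → HasFreeSections Q)
    (P : ι → Finset α) (hdisj : Pairwise (Disjoint on P)) (hcard : ∀ i, n i ≤ #(P i)) :
    HasFreeSections P := by
  have := Fintype.ofFinite ι
  obtain ⟨U, hUP, hUn⟩ := exists_subset_biUnion_card_inter_eq (s := univ)
    (hdisj.set_pairwise _) fun i _ ↦ hcard i
  obtain ⟨m, f, rfl⟩ := exists_embedding_fin_map_univ_eq U
  refine .of_preimage f (hyp m _ (fun _ _ hij ↦ disjoint_preimage (hdisj hij)) (fun z ↦ ?_)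
    fun i ↦ ?_)
  · obtain ⟨i, -, hzi⟩ := mem_biUnion.1 (hUP (mem_map_of_mem f (mem_univ z)))
    exact ⟨i, mem_preimage.2 hzi⟩
  · rw [← hUn i (mem_univ i), ← map_inter_preimage, card_map, univ_inter]

/-- The reduction step in the proof of Lemma 7.4: if the section lemma conclusion holds for
all partitions into `k` pieces each of size exactly `N`, then it holds for all
`(k,N)`-partitions (pieces of size at least `N`). -/
theorem section_lemma_reduction (k N : ℕ)
    (hyp : ∀ (β : Type) [Fintype β] [DecidableEq β] (Q : Fin k → Finset β),
      (∀ i j : Fin k, i ≠ j → Disjoint (Q i) (Q j)) →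
      (∀ z : β, ∃ i : Fin k, z ∈ Q i) →
      (∀ i : Fin k, (Q i).card = N) →
      ∀ e : Finset β → Finset β,
        ∃ E : Finset β, (∀ i : Fin k, (E ∩ Q i).card = 1) ∧
          ∀ F ⊆ E, e F ⊆ F ∨ ¬ e F ⊆ E) :
    ∀ (α : Type) [Fintype α] [DecidableEq α] (P : Fin k → Finset α),
      (∀ i j : Fin k, i ≠ j → Disjoint (P i) (P j)) →
      (∀ x : α, ∃ i : Fin k, x ∈ P i) →
      (∀ i : Fin k, N ≤ (P i).card) →
      ∀ e : Finset α → Finset α,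
        ∃ E : Finset α, (∀ i : Fin k, (E ∩ P i).card = 1) ∧
          ∀ F ⊆ E, e F ⊆ F ∨ ¬ e F ⊆ E := by
  intro α _ _ P hdisj _ hcard
  exact section_lemma_reduction_general (fun _ ↦ N)
    (fun m Q hQ ↦ hyp (Fin m) Q fun _ _ h ↦ hQ h) P (fun i j ↦ hdisj i j) hcard
end
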